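/- arXiv:1910.11392 — 2 statements merged into one kernel-verified Lean document; each statement's English description precedes it below -/
import Mathlib

section
/- Two-dimensional moment persuasion, necessity: assume in addition that Ω is convex with non-empty interior. Let a > 0 and let G be the distribution of posterior means induced by revealing ω₂ + aω₁, i.e. the law of x(θ) = E_{F₀}[ω | ω₂ + aω₁ = θ]. If G is an optimal solution to (P_m), then the support of G is contained in a line {(x₁, x₂) : x₂ = a x₁ + b} for some b ∈ ℝ. -/
open MeasureTheory

/-- The (topological) support of a measure: points all of whose open neighborhoods have
positive measure. -/
def msupport {α : Type*} [TopologicalSpace α] [MeasurableSpace α] (τ : Measure α) : Set α :=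
  {x | ∀ U : Set α, IsOpen U → x ∈ U → τ U ≠ 0}

/-!
Describe an information structure by the joint law of a signal and the state. For a quadratic
objective `v x = B x x`, the conditional Pythagorean identity turns maximizing the expected value at
the posterior mean into minimizing the expected residual `B (ω - x) (ω - x)`. Mixing an amount `t`
of a perturbation whose signal law has bounded density into an optimal law moves the posterior mean
by `O(t)`, hence the value by `O(t²)` beyond the linear term, so the residual is minimal under every
such perturbation. Redrawing the signal near one point of the support then gives the pointwise
inequality `B (ω - x) (ω - x) ≤ B (ω - x') (ω - x')` for supported pairs `(x, ω)` and `(x', ω')`,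
and therefore

* `0 ≤ B (ω - ω') (x - x') + B (x - x') (ω - ω')`, by adding the inequality to its mirror image;
* `0 ≤ B (x - x') (x - x')`, by conditioning on the signal.

In dimension two, `4 a x₁ x₂ = θ² - s²` with `θ = x₂ + a x₁` and `s = x₂ - a x₁`, and revealing `θ`
forces `θ x = θ ω`. The second inequality reads `|s x - s x'| ≤ |θ ω - θ ω'|`, so `s x` is a
function of `θ ω`. The first one reads `(s ω - s ω') (s x - s x') ≤ (θ ω - θ ω')²`; moving `ω` along
the fiber of `θ`, so that `s ω - s ω'` stays away from `0` with either sign, shows that this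
function has zero derivative. Hence `s x` is constant, which is the equation of the line.
-/

open Filter Set Topology
open scoped ENNReal NNReal

theorem msupport_eq_support {α : Type*} [TopologicalSpace α] [MeasurableSpace α]
    (τ : Measure α) : msupport τ = τ.support := by
  ext x
  simp only [msupport, Measure.support_eq_forall_isOpen, mem_ofPred_eq, pos_iff_ne_zero]
  exact forall_congr' fun U => forall_comm

theorem support_map_subset_image_support {α β : Type*}
    [TopologicalSpace α] [MeasurableSpace α] [SecondCountableTopology α]
    [TopologicalSpace β] [T2Space β] [MeasurableSpace β] [BorelSpace β]
    {τ : Measure α} (hτ : IsCompact τ.support) {f : α → β} (hf : Continuous f)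
    (hfm : Measurable f) : (τ.map f).support ⊆ f '' τ.support := by
  have hcl : IsClosed (f '' τ.support) := (hτ.image hf).isClosed
  refine Measure.support_subset_of_isClosed hcl ?_
  rw [mem_ae_map_iff hfm.aemeasurable hcl.measurableSet]
  exact mem_of_superset Measure.support_mem_ae (subset_preimage_image f _)

theorem nonpos_of_forall_mul_le_mul_sq {a K δ : ℝ} (hδ : 0 < δ)
    (h : ∀ t, 0 < t → t ≤ δ → t * a ≤ K * t ^ 2) : a ≤ 0 := by
  have hlim : Tendsto (fun t => K * t) (𝓝[>] 0) (𝓝 0) := by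
    have hcont : Continuous fun t => K * t := by fun_prop
    simpa only [mul_zero] using hcont.continuousWithinAt.tendsto (x := 0)
  refine ge_of_tendsto hlim ?_
  filter_upwards [Ioc_mem_nhdsGT hδ] with t ⟨ht, htδ⟩
  exact le_of_mul_le_mul_left (by linarith [h t ht htδ]) ht

theorem ae_mem_prod_of_fst_absolutelyContinuous_of_snd_eq {α β : Type*} [MeasurableSpace α]
    [MeasurableSpace β] {T N : Measure (α × β)} {A : Set α} {C : Set β}
    (hA : MeasurableSet A) (hC : MeasurableSet C) (hfst : N.fst ≪ T.fst) (hsnd : N.snd = T.snd)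
    (hT : ∀ᵐ p ∂T, p ∈ A ×ˢ C) :
    ∀ᵐ p ∂N, p ∈ A ×ˢ C := by
  have hA' : ∀ᵐ x ∂T.fst, x ∈ A :=
    (ae_map_iff measurable_fst.aemeasurable hA).2 (hT.mono fun _ h => h.1)
  have hC' : ∀ᵐ y ∂N.snd, y ∈ C :=
    hsnd ▸ (ae_map_iff measurable_snd.aemeasurable hC).2 (hT.mono fun _ h => h.2)
  filter_upwards [ae_of_ae_map measurable_fst.aemeasurable (hfst.ae_le hA'),
    ae_of_ae_map measurable_snd.aemeasurable hC'] with p h₁ h₂ using ⟨h₁, h₂⟩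

theorem integral_smul_add_smul_measure {α E : Type*} [MeasurableSpace α]
    [NormedAddCommGroup E] [NormedSpace ℝ E] {g : α → E} {μ ν : Measure α}
    (hμ : Integrable g μ) (hν : Integrable g ν) (s t : ℝ≥0) :
    ∫ x, g x ∂(s • μ + t • ν) = s • ∫ x, g x ∂μ + t • ∫ x, g x ∂ν := by
  rw [integral_add_measure (hμ.smul_measure_nnreal) (hν.smul_measure_nnreal),
    integral_smul_nnreal_measure, integral_smul_nnreal_measure]

theorem norm_setIntegral_snd_sub_fst_le {E : Type*} [NormedAddCommGroup E] [NormedSpace ℝ E]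
    [MeasurableSpace E] {S : Set E} {T N : Measure (E × E)} [IsFiniteMeasure T] [IsFiniteMeasure N]
    (hS : Bornology.IsBounded S) (hN : ∀ᵐ q ∂N, q ∈ S ×ˢ S) {c : ℝ≥0}
    (hNT : N.fst ≤ c • T.fst) {A : Set E} (hA : MeasurableSet A) :
    ‖∫ q in Prod.fst ⁻¹' A, (q.2 - q.1) ∂N‖ ≤ Metric.diam S * (c * T.real (Prod.fst ⁻¹' A)) := by
  have hle : N (Prod.fst ⁻¹' A) ≤ c * T (Prod.fst ⁻¹' A) := by
    simpa only [Measure.fst_apply hA, Measure.smul_apply, ENNReal.smul_def, smul_eq_mul]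
      using hNT A
  have hreal : N.real (Prod.fst ⁻¹' A) ≤ c * T.real (Prod.fst ⁻¹' A) := by
    simpa [measureReal_def] using ENNReal.toReal_mono (by finiteness) hle
  calc ‖∫ q in Prod.fst ⁻¹' A, (q.2 - q.1) ∂N‖
      ≤ Metric.diam S * N.real (Prod.fst ⁻¹' A) := by
        refine norm_setIntegral_le_of_norm_le_const_ae' (measure_lt_top _ _) ?_
        filter_upwards [hN] with q hq _
        rw [← dist_eq_norm]
        exact Metric.dist_le_diam_of_mem hS hq.2 hq.1
    _ ≤ Metric.diam S * (c * T.real (Prod.fst ⁻¹' A)) := by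
        gcongr

section CondExp

variable {Ω E F : Type*} {m m₀ : MeasurableSpace Ω} {μ : Measure Ω}
  [NormedAddCommGroup E] [NormedSpace ℝ E] [NormedAddCommGroup F] [NormedSpace ℝ F]
  {f z : Ω → E}

theorem integrable_bilin (B : E →L[ℝ] E →L[ℝ] F) (hf : MemLp f 2 μ) (hz : MemLp z 2 μ) :
    Integrable (fun a => B (f a) (z a)) μ :=
  memLp_one_iff_integrable.1 (B.memLp_of_bilin 1 hf hz)

theorem neg_le_integral_bilin_of_norm_le [IsProbabilityMeasure μ]
    (B : E →L[ℝ] E →L[ℝ] ℝ) {K : ℝ} (hf : ∀ᵐ a ∂μ, ‖f a‖ ≤ K) :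
    -(‖B‖ * K ^ 2) ≤ ∫ a, B (f a) (f a) ∂μ := by
  have hbound : ∀ᵐ a ∂μ, ‖B (f a) (f a)‖ ≤ ‖B‖ * K ^ 2 := by
    filter_upwards [hf] with a ha
    calc ‖B (f a) (f a)‖ ≤ ‖B‖ * ‖f a‖ * ‖f a‖ := B.le_opNorm₂ _ _
      _ = ‖B‖ * ‖f a‖ ^ 2 := by ring
      _ ≤ ‖B‖ * K ^ 2 := by gcongr
  have h := norm_integral_le_of_norm_le_const hbound
  rw [probReal_univ, mul_one] at h
  exact (abs_le.1 h).1

variable [IsFiniteMeasure μ] [CompleteSpace E]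

theorem ae_mem_of_forall_setAverage_mem [SecondCountableTopology E] {C : Set E}
    (hconv : Convex ℝ C) (hclosed : IsClosed C) (hf : Integrable f μ)
    (havg : ∀ s, MeasurableSet[m₀] s → μ s ≠ 0 → ⨍ a in s, f a ∂μ ∈ C) :
    ∀ᵐ a ∂μ, f a ∈ C := by
  obtain ⟨L, c, hLc⟩ := RCLike.iInter_countable_halfSpaces_eq (𝕜 := ℝ) hconv hclosed
  have hC {v : E} : v ∈ C ↔ ∀ n, L n v ≤ c n := by simp [← hLc]
  simp only [hC, ae_all_iff] at havg ⊢
  intro n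
  refine ae_le_of_forall_setIntegral_le ((L n).integrable_comp hf) (integrable_const _)
    fun s hs _ => ?_
  rcases eq_or_ne (μ s) 0 with h₀ | h₀
  · simp [Measure.restrict_eq_zero.2 h₀]
  calc ∫ a in s, L n (f a) ∂μ = L n (∫ a in s, f a ∂μ) :=
        (L n).integral_comp_comm hf.integrableOn
    _ = μ.real s * L n (⨍ a in s, f a ∂μ) := by
        rw [← measure_smul_setAverage f (measure_ne_top μ s), map_smul, smul_eq_mul]
    _ ≤ μ.real s * c n := by gcongr; exact havg s hs h₀ n
    _ = ∫ _ in s, c n ∂μ := by simp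

theorem norm_condExp_le_of_forall_norm_setIntegral_le
    [SecondCountableTopology E] (hm : m ≤ m₀) (hf : Integrable f μ) {K : ℝ}
    (hK : ∀ s, MeasurableSet[m] s → ‖∫ a in s, f a ∂μ‖ ≤ K * μ.real s) :
    ∀ᵐ a ∂μ, ‖(μ[f | m]) a‖ ≤ K := by
  have hint : Integrable (μ[f | m]) (μ.trim hm) :=
    integrable_condExp.trim hm stronglyMeasurable_condExp
  refine ae_of_ae_trim hm ?_
  simp_rw [← mem_closedBall_zero_iff]
  refine ae_mem_of_forall_setAverage_mem (convex_closedBall 0 K) Metric.isClosed_closedBall hint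
    fun s hs h₀ => ?_
  rw [trim_measurableSet_eq hm hs] at h₀
  have hpos : 0 < μ.real s := ENNReal.toReal_pos h₀ (measure_ne_top μ s)
  rw [setAverage_eq, ← setIntegral_trim hm stronglyMeasurable_condExp hs,
    setIntegral_condExp hm hf hs, measureReal_def, trim_measurableSet_eq hm hs, ← measureReal_def,
    mem_closedBall_zero_iff, norm_smul, Real.norm_of_nonneg (by positivity),
    inv_mul_le_iff₀ hpos, mul_comm]
  exact hK s hs

theorem condExp_sub_condExp (hm : m ≤ m₀) (hf : Integrable f μ) :
    μ[f - μ[f | m] | m] =ᵐ[μ] 0 := by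
  filter_upwards [condExp_sub hf (integrable_condExp (m := m)) m] with a ha
  rw [ha, condExp_of_stronglyMeasurable hm stronglyMeasurable_condExp integrable_condExp, sub_self,
    Pi.zero_apply]

variable [CompleteSpace F]

theorem condExp_bilin_sub_condExp (B : E →L[ℝ] E →L[ℝ] F) (hm : m ≤ m₀)
    (hf : MemLp f 2 μ) (hz : MemLp z 2 μ) (hzm : StronglyMeasurable[m] z) :
    μ[fun a => B (f a - (μ[f | m]) a) (z a) | m] =ᵐ[μ] 0 := by
  have hres : MemLp (f - μ[f | m]) 2 μ := hf.sub (hf.condExp one_le_two)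
  filter_upwards [condExp_bilin_of_stronglyMeasurable_right B hzm (integrable_bilin B hres hz)
    (hres.integrable one_le_two), condExp_sub_condExp hm (hf.integrable one_le_two)] with a ha h₀
  exact ha.trans (by simp [h₀])

/-- Conditional Pythagoras: the residual `f - μ[f | m]` is orthogonal to every `m`-measurable
square-integrable function, for an arbitrary bilinear form. -/
theorem condExp_bilin_sub_sub_bilin_sub_condExp (B : E →L[ℝ] E →L[ℝ] F)
    (hm : m ≤ m₀) (hf : MemLp f 2 μ) (hz : MemLp z 2 μ) (hzm : StronglyMeasurable[m] z) :
    μ[fun a => B (f a - z a) (f a - z a)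
      - B (f a - (μ[f | m]) a) (f a - (μ[f | m]) a) | m]
      =ᵐ[μ] fun a => B ((μ[f | m]) a - z a) ((μ[f | m]) a - z a) := by
  set y := μ[f | m]
  have hyz : MemLp (fun a => y a - z a) 2 μ := (hf.condExp one_le_two).sub hz
  have hres : MemLp (fun a => f a - y a) 2 μ := hf.sub (hf.condExp one_le_two)
  have hyzm : StronglyMeasurable[m] fun a => y a - z a := stronglyMeasurable_condExp.sub hzm
  have hexpand : (fun a => B (f a - z a) (f a - z a) - B (f a - y a) (f a - y a))
      = (fun a => B (f a - y a) (y a - z a)) + (fun a => B.flip (f a - y a) (y a - z a))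
        + fun a => B (y a - z a) (y a - z a) := by
    ext a
    simp only [map_sub, sub_apply, ContinuousLinearMap.flip_apply, Pi.add_apply]
    abel
  have hcross : ∀ B' : E →L[ℝ] E →L[ℝ] F, μ[fun a => B' (f a - y a) (y a - z a) | m] =ᵐ[μ] 0 :=
    fun B' => condExp_bilin_sub_condExp B' hm hf hyz hyzm
  have hsqm : StronglyMeasurable[m] fun a => B (y a - z a) (y a - z a) :=
    B.continuous₂.comp_stronglyMeasurable (hyzm.prodMk hyzm)
  rw [hexpand]
  filter_upwards [condExp_add ((integrable_bilin B hres hyz).add (integrable_bilin B.flip hres hyz))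
      (integrable_bilin B hyz hyz) m,
    condExp_add (integrable_bilin B hres hyz) (integrable_bilin B.flip hres hyz) m,
    hcross B, hcross B.flip] with a hadd hadd' hB hB'
  rw [condExp_of_stronglyMeasurable hm hsqm (integrable_bilin B hyz hyz)] at hadd
  refine hadd.trans ?_
  rw [Pi.add_apply, hadd', Pi.add_apply, hB, hB', Pi.zero_apply, add_zero, zero_add]

theorem integral_bilin_sub_eq_add (B : E →L[ℝ] E →L[ℝ] F)
    (hm : m ≤ m₀) (hf : MemLp f 2 μ) (hz : MemLp z 2 μ) (hzm : StronglyMeasurable[m] z) :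
    ∫ a, B (f a - z a) (f a - z a) ∂μ
      = ∫ a, B (f a - (μ[f | m]) a) (f a - (μ[f | m]) a) ∂μ
        + ∫ a, B ((μ[f | m]) a - z a) ((μ[f | m]) a - z a) ∂μ := by
  have hdiff : MemLp (fun a => f a - z a) 2 μ := hf.sub hz
  have hres : MemLp (fun a => f a - (μ[f | m]) a) 2 μ := hf.sub (hf.condExp one_le_two)
  rw [← integral_congr_ae (condExp_bilin_sub_sub_bilin_sub_condExp B hm hf hz hzm),
    integral_condExp hm, integral_sub (integrable_bilin B hdiff hdiff)
      (integrable_bilin B hres hres), add_sub_cancel]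

theorem integral_bilin_sub_condExp (B : E →L[ℝ] E →L[ℝ] F)
    (hm : m ≤ m₀) (hf : MemLp f 2 μ) :
    ∫ a, B (f a - (μ[f | m]) a) (f a - (μ[f | m]) a) ∂μ
      = ∫ a, B (f a) (f a) ∂μ - ∫ a, B ((μ[f | m]) a) ((μ[f | m]) a) ∂μ := by
  have h := integral_bilin_sub_eq_add B hm hf MemLp.zero stronglyMeasurable_const
  simp only [Pi.zero_apply, sub_zero] at h
  rw [h, add_sub_cancel_right]

end CondExp

section CompactSupport

variable {Ω E : Type*} {m m₀ : MeasurableSpace Ω} {μ : Measure Ω} [IsFiniteMeasure μ]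
  [NormedAddCommGroup E] [MeasurableSpace E] [BorelSpace E] {f : Ω → E} {S : Set E} {φ : E → ℝ}

theorem integrable_map_of_ae_mem_isCompact (hS : IsCompact S) (hφ : ContinuousOn φ S)
    (hf : AEMeasurable f μ) (hfS : ∀ᵐ a ∂μ, f a ∈ S) : Integrable φ (μ.map f) := by
  rw [← Measure.restrict_eq_self_of_ae_mem ((ae_map_iff hf hS.measurableSet).2 hfS)]
  exact hφ.integrableOn_compact hS

variable [SecondCountableTopology E]

theorem memLp_of_ae_mem_isCompact (hS : IsCompact S) (p : ℝ≥0∞) (hf : AEMeasurable f μ)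
    (hfS : ∀ᵐ a ∂μ, f a ∈ S) : MemLp f p μ := by
  obtain ⟨R, hR⟩ := hS.isBounded.exists_norm_le
  exact MemLp.of_bound hf.aestronglyMeasurable R (hfS.mono fun a ha => hR _ ha)

theorem integrable_of_ae_mem_isCompact (hS : IsCompact S) (hf : AEMeasurable f μ)
    (hfS : ∀ᵐ a ∂μ, f a ∈ S) : Integrable f μ :=
  memLp_one_iff_integrable.1 (memLp_of_ae_mem_isCompact hS 1 hf hfS)

theorem memLp_fst_of_ae_mem_prod {T : Measure (E × E)} [IsFiniteMeasure T]
    (hS : IsCompact S) (p : ℝ≥0∞) (hT : ∀ᵐ q ∂T, q ∈ S ×ˢ S) :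
    MemLp Prod.fst p T :=
  memLp_of_ae_mem_isCompact hS p measurable_fst.aemeasurable (hT.mono fun _ h => h.1)

theorem memLp_snd_of_ae_mem_prod {T : Measure (E × E)} [IsFiniteMeasure T]
    (hS : IsCompact S) (p : ℝ≥0∞) (hT : ∀ᵐ q ∂T, q ∈ S ×ˢ S) :
    MemLp Prod.snd p T :=
  memLp_of_ae_mem_isCompact hS p measurable_snd.aemeasurable (hT.mono fun _ h => h.2)

theorem integrable_snd_sub_fst {T : Measure (E × E)} [IsFiniteMeasure T] (hS : IsCompact S)
    (hT : ∀ᵐ q ∂T, q ∈ S ×ˢ S) :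
    Integrable (fun q => q.2 - q.1) T :=
  ((memLp_snd_of_ae_mem_prod hS 1 hT).sub (memLp_fst_of_ae_mem_prod hS 1 hT)).integrable le_rfl

theorem integral_map_condExp_le [NormedSpace ℝ E] [CompleteSpace E] (hm : m ≤ m₀)
    (hS : IsCompact S) (hφ : ContinuousOn φ S) (hφc : ConvexOn ℝ S φ) (hf : AEMeasurable f μ)
    (hfS : ∀ᵐ a ∂μ, f a ∈ S) :
    ∫ v, φ v ∂(μ.map (μ[f | m])) ≤ ∫ v, φ v ∂(μ.map f) := by
  have hfint : Integrable f μ := integrable_of_ae_mem_isCompact hS hf hfS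
  have hy : AEMeasurable (μ[f | m]) μ := integrable_condExp.aestronglyMeasurable.aemeasurable
  have hyS : ∀ᵐ a ∂μ, (μ[f | m]) a ∈ S := hφc.1.condExp_mem hm hfint hS.isClosed hfS
  have hφf : Integrable φ (μ.map f) := integrable_map_of_ae_mem_isCompact hS hφ hf hfS
  have hφy : Integrable φ (μ.map (μ[f | m])) := integrable_map_of_ae_mem_isCompact hS hφ hy hyS
  have hφf' : Integrable (φ ∘ f) μ := hφf.comp_aemeasurable hf
  calc ∫ v, φ v ∂(μ.map (μ[f | m])) = ∫ a, φ ((μ[f | m]) a) ∂μ :=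
        integral_map hy hφy.aestronglyMeasurable
    _ ≤ ∫ a, (μ[φ ∘ f | m]) a ∂μ :=
        integral_mono_ae (hφy.comp_aemeasurable hy) integrable_condExp
          (hφc.map_condExp_le hm hφ.lowerSemicontinuousOn hfS hS.isClosed hfint hφf')
    _ = ∫ v, φ v ∂(μ.map f) := by
        rw [integral_condExp hm, integral_map hf hφf.aestronglyMeasurable]; rfl

end CompactSupport

section Coupling

variable {α E : Type*} [MeasurableSpace α] [NormedAddCommGroup E] [NormedSpace ℝ E]
  [CompleteSpace E] [MeasurableSpace E] [BorelSpace E] [SecondCountableTopology E]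

/-- The posterior mean of the state (second coordinate) given the signal (first coordinate), for
a joint law `ρ` of signal and state; it is a function of the pair that depends on the signal
only. -/
noncomputable def posteriorMean (ρ : Measure (α × E)) : α × E → E :=
  ρ[Prod.snd | MeasurableSpace.comap Prod.fst inferInstance]

/-- A joint law of signal and state whose signal is already the posterior mean of the state. -/
def IsPosteriorMeanCoupling (T : Measure (E × E)) : Prop :=
  posteriorMean T =ᵐ[T] Prod.fst

theorem isPosteriorMeanCoupling_map_condExp {Ω : Type*} {m m₀ : MeasurableSpace Ω}
    {μ : Measure Ω} [IsFiniteMeasure μ] (hm : m ≤ m₀) {f : Ω → E} (hfm : Measurable f)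
    (hf : Integrable f μ) :
    IsPosteriorMeanCoupling (μ.map fun a => ((μ[f | m]) a, f a)) := by
  set y := μ[f | m]
  have hym : StronglyMeasurable[m] y := stronglyMeasurable_condExp
  have hpair : Measurable fun a => (y a, f a) := (hym.mono hm).measurable.prodMk hfm
  have hpair' : AEMeasurable (fun a => (y a, f a)) μ := hpair.aemeasurable
  have hint (g : E × E → E) (hg : Measurable g) (hgi : Integrable (fun a => g (y a, f a)) μ) :
      Integrable g (μ.map fun a => (y a, f a)) :=
    (integrable_map_measure hg.aestronglyMeasurable hpair').2 hgi
  refine (ae_eq_condExp_of_forall_setIntegral_eq measurable_fst.comap_le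
    (hint _ measurable_snd hf)
    (fun A _ _ => (hint _ measurable_fst integrable_condExp).integrableOn)
    ?_ (comap_measurable Prod.fst).stronglyMeasurable.aestronglyMeasurable).symm
  rintro _ ⟨A, hA, rfl⟩ -
  rw [setIntegral_map (measurable_fst hA) measurable_fst.aestronglyMeasurable hpair',
    setIntegral_map (measurable_fst hA) measurable_snd.aestronglyMeasurable hpair']
  exact setIntegral_condExp hm hf (hym.measurable hA)

section Mixture

variable {S : Set E} {T N : Measure (E × E)} [IsFiniteMeasure T] [IsFiniteMeasure N]

theorem condExp_snd_sub_fst (hS : IsCompact S) (hT : ∀ᵐ q ∂T, q ∈ S ×ˢ S) :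
    T[fun q => q.2 - q.1 | MeasurableSpace.comap Prod.fst inferInstance]
      =ᵐ[T] fun q => posteriorMean T q - q.1 := by
  have hfst : Integrable Prod.fst T := (memLp_fst_of_ae_mem_prod hS 1 hT).integrable le_rfl
  have hsnd : Integrable Prod.snd T := (memLp_snd_of_ae_mem_prod hS 1 hT).integrable le_rfl
  filter_upwards [condExp_sub hsnd hfst (MeasurableSpace.comap Prod.fst inferInstance)] with q hq
  refine hq.trans ?_
  rw [condExp_of_stronglyMeasurable measurable_fst.comap_le
    (comap_measurable Prod.fst).stronglyMeasurable hfst]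
  rfl

theorem IsPosteriorMeanCoupling.setIntegral_snd_sub_fst_eq_zero (hTm : IsPosteriorMeanCoupling T)
    (hS : IsCompact S) (hT : ∀ᵐ q ∂T, q ∈ S ×ˢ S) {A : Set E} (hA : MeasurableSet A) :
    ∫ q in Prod.fst ⁻¹' A, (q.2 - q.1) ∂T = 0 := by
  rw [← setIntegral_condExp measurable_fst.comap_le (integrable_snd_sub_fst hS hT) ⟨A, hA, rfl⟩]
  refine setIntegral_eq_zero_of_ae_eq_zero ?_
  filter_upwards [condExp_snd_sub_fst hS hT, hTm] with q hq hq' _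
  rw [hq, hq', sub_self]

/-- Mixing a small amount `t` of `N` into a posterior-mean coupling `T` moves the posterior mean
by `O(t)`, because on each signal event the contribution of `T` vanishes. -/
theorem IsPosteriorMeanCoupling.norm_posteriorMean_add_smul_sub_fst_le
    (hTm : IsPosteriorMeanCoupling T) (hS : IsCompact S) (hT : ∀ᵐ q ∂T, q ∈ S ×ˢ S)
    (hN : ∀ᵐ q ∂N, q ∈ S ×ˢ S) {c : ℝ≥0} (hNT : N.fst ≤ c • T.fst) {s t : ℝ≥0} (hs : 1 ≤ 2 * s) :
    ∀ᵐ q ∂(s • T + t • N), ‖posteriorMean (s • T + t • N) q - q.1‖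
      ≤ 2 * c * Metric.diam S * t := by
  set Q := s • T + t • N with hQ_def
  have hQ : ∀ᵐ q ∂Q, q ∈ S ×ˢ S :=
    ae_add_measure_iff.2 ⟨Measure.ae_smul_measure hT s, Measure.ae_smul_measure hN t⟩
  have hbound : ∀ A, MeasurableSet[MeasurableSpace.comap Prod.fst inferInstance] A →
      ‖∫ q in A, (q.2 - q.1) ∂Q‖ ≤ 2 * c * Metric.diam S * t * Q.real A := by
    rintro _ ⟨A, hA, rfl⟩
    have hTQ : s * T.real (Prod.fst ⁻¹' A) ≤ Q.real (Prod.fst ⁻¹' A) := by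
      rw [hQ_def, measureReal_add_apply, measureReal_nnreal_smul_apply]
      exact le_add_of_nonneg_right measureReal_nonneg
    have hTQ' : T.real (Prod.fst ⁻¹' A) ≤ 2 * Q.real (Prod.fst ⁻¹' A) := by
      have hs' : (1 : ℝ) ≤ 2 * s := mod_cast hs
      nlinarith [hs', measureReal_nonneg (μ := T) (s := Prod.fst ⁻¹' A)]
    calc ‖∫ q in Prod.fst ⁻¹' A, (q.2 - q.1) ∂Q‖
        = ‖t • ∫ q in Prod.fst ⁻¹' A, (q.2 - q.1) ∂N‖ := by
          rw [hQ_def, Measure.restrict_add, Measure.restrict_smul, Measure.restrict_smul,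
            integral_smul_add_smul_measure (integrable_snd_sub_fst hS hT).integrableOn
              (integrable_snd_sub_fst hS hN).integrableOn,
            hTm.setIntegral_snd_sub_fst_eq_zero hS hT hA, smul_zero, zero_add]
      _ = t * ‖∫ q in Prod.fst ⁻¹' A, (q.2 - q.1) ∂N‖ := by
          rw [NNReal.smul_def, norm_smul, Real.norm_of_nonneg t.coe_nonneg]
      _ ≤ t * (Metric.diam S * (c * (2 * Q.real (Prod.fst ⁻¹' A)))) := by
          gcongr
          exact (norm_setIntegral_snd_sub_fst_le hS.isBounded hN hNT hA).trans (by gcongr)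
      _ = 2 * c * Metric.diam S * t * Q.real (Prod.fst ⁻¹' A) := by ring
  filter_upwards [condExp_snd_sub_fst hS hQ, norm_condExp_le_of_forall_norm_setIntegral_le
    measurable_fst.comap_le (integrable_snd_sub_fst hS hQ) hbound] with q hq hq'
  rwa [hq] at hq'

/-- `T` solves the moment persuasion problem with objective `v x = B x x`, written for joint laws
of signal and state: among all of them with the same law of the state, `T` maximizes the expected
value of `v` at the posterior mean, and the signal of `T` is its posterior mean. -/
structure IsOptimalCoupling (B : E →L[ℝ] E →L[ℝ] ℝ) (T : Measure (E × E)) : Prop where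
  isPosteriorMeanCoupling : IsPosteriorMeanCoupling T
  integral_le : ∀ ρ : Measure (E × E), IsProbabilityMeasure ρ → ρ.snd = T.snd →
    ∫ q, B (posteriorMean ρ q) (posteriorMean ρ q) ∂ρ ≤ ∫ q, B q.1 q.1 ∂T

theorem integral_bilin_snd_sub_posteriorMean (B : E →L[ℝ] E →L[ℝ] ℝ) (hS : IsCompact S)
    (hT : ∀ᵐ q ∂T, q ∈ S ×ˢ S) :
    ∫ q, B (q.2 - posteriorMean T q) (q.2 - posteriorMean T q) ∂T
      = ∫ w, B w w ∂T.snd - ∫ q, B (posteriorMean T q) (posteriorMean T q) ∂T := by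
  have hB : Continuous fun w => B w w := B.continuous₂.comp (continuous_id.prodMk continuous_id)
  rw [Measure.snd, integral_map measurable_snd.aemeasurable
    hB.stronglyMeasurable.aestronglyMeasurable]
  exact integral_bilin_sub_condExp B measurable_fst.comap_le (memLp_snd_of_ae_mem_prod hS 2 hT)

theorem integral_bilin_snd_sub_fst_eq_add (B : E →L[ℝ] E →L[ℝ] ℝ) (hS : IsCompact S)
    (hT : ∀ᵐ q ∂T, q ∈ S ×ˢ S) :
    ∫ q, B (q.2 - q.1) (q.2 - q.1) ∂T
      = ∫ q, B (q.2 - posteriorMean T q) (q.2 - posteriorMean T q) ∂T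
        + ∫ q, B (posteriorMean T q - q.1) (posteriorMean T q - q.1) ∂T :=
  integral_bilin_sub_eq_add B measurable_fst.comap_le (memLp_snd_of_ae_mem_prod hS 2 hT)
    (memLp_fst_of_ae_mem_prod hS 2 hT) (comap_measurable Prod.fst).stronglyMeasurable

end Mixture

section FirstOrderCondition

variable {B : E →L[ℝ] E →L[ℝ] ℝ} {S : Set E} {T N : Measure (E × E)} [IsProbabilityMeasure T]
  [IsProbabilityMeasure N]

/-- Maximizing the value at the posterior mean amounts to minimizing the residual. -/
theorem IsOptimalCoupling.integral_residual_le (hopt : IsOptimalCoupling B T) (hS : IsCompact S)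
    (hT : ∀ᵐ q ∂T, q ∈ S ×ˢ S) (hsnd : N.snd = T.snd)
    (hN : ∀ᵐ q ∂N, q ∈ S ×ˢ S) :
    ∫ q, B (q.2 - q.1) (q.2 - q.1) ∂T
      ≤ ∫ q, B (q.2 - posteriorMean N q) (q.2 - posteriorMean N q) ∂N := by
  have hfst : ∀ F : E → E → ℝ, ∫ q, F q.2 (posteriorMean T q) ∂T = ∫ q, F q.2 q.1 ∂T :=
    fun F => integral_congr_ae (hopt.isPosteriorMeanCoupling.mono fun q hq => by simp only [hq])
  rw [← hfst fun w z => B (w - z) (w - z), integral_bilin_snd_sub_posteriorMean B hS hT,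
    integral_bilin_snd_sub_posteriorMean B hS hN, hsnd, hfst fun _ z => B z z]
  gcongr
  exact hopt.integral_le N ‹_› hsnd

theorem IsOptimalCoupling.mul_sub_integral_bilin_le (hopt : IsOptimalCoupling B T)
    (hS : IsCompact S) (hT : ∀ᵐ q ∂T, q ∈ S ×ˢ S) (hN : ∀ᵐ q ∂N, q ∈ S ×ˢ S)
    (hsnd : N.snd = T.snd) {c : ℝ≥0} (hNT : N.fst ≤ c • T.fst) {s t : ℝ≥0} (hst : s + t = 1)
    (hs : 1 ≤ 2 * s) :
    t * (∫ q, B (q.2 - q.1) (q.2 - q.1) ∂T - ∫ q, B (q.2 - q.1) (q.2 - q.1) ∂N)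
      ≤ ‖B‖ * (2 * c * Metric.diam S * t) ^ 2 := by
  set Q := s • T + t • N with hQ_def
  have hQsnd : Q.snd = T.snd := by
    rw [hQ_def, Measure.snd_add, Measure.snd, Measure.snd, Measure.map_smul, Measure.map_smul,
      ← Measure.snd, ← Measure.snd, hsnd, ← add_smul, hst, one_smul]
  have : IsProbabilityMeasure Q := ⟨by rw [← Measure.snd_univ, hQsnd, measure_univ]⟩
  have hQ : ∀ᵐ q ∂Q, q ∈ S ×ˢ S :=
    ae_add_measure_iff.2 ⟨Measure.ae_smul_measure hT s, Measure.ae_smul_measure hN t⟩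
  have hint {ρ : Measure (E × E)} [IsFiniteMeasure ρ] (hρ : ∀ᵐ q ∂ρ, q ∈ S ×ˢ S) :
      Integrable (fun q => B (q.2 - q.1) (q.2 - q.1)) ρ :=
    integrable_bilin B ((memLp_snd_of_ae_mem_prod hS 2 hρ).sub (memLp_fst_of_ae_mem_prod hS 2 hρ))
      ((memLp_snd_of_ae_mem_prod hS 2 hρ).sub (memLp_fst_of_ae_mem_prod hS 2 hρ))
  have hmix := integral_smul_add_smul_measure (hint hT) (hint hN) s t
  have hres := hopt.integral_residual_le hS hT hQsnd hQ
  have hpyth := integral_bilin_snd_sub_fst_eq_add B hS hQ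
  have hdev := neg_le_integral_bilin_of_norm_le B
    (hopt.isPosteriorMeanCoupling.norm_posteriorMean_add_smul_sub_fst_le hS hT hN hNT hs
      (t := t))
  have hst' : (s : ℝ) = 1 - t := eq_sub_of_add_eq (mod_cast hst)
  simp only [NNReal.smul_def, smul_eq_mul, hst'] at hmix
  rw [hpyth] at hmix
  linarith

/-- First-order condition: optimality makes the residual minimal among all couplings with the same
state law whose signal law has bounded density. -/
theorem IsOptimalCoupling.integral_bilin_le (hopt : IsOptimalCoupling B T) (hS : IsCompact S)
    (hT : ∀ᵐ q ∂T, q ∈ S ×ˢ S) (hsnd : N.snd = T.snd) {c : ℝ≥0} (hNT : N.fst ≤ c • T.fst) :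
    ∫ q, B (q.2 - q.1) (q.2 - q.1) ∂T ≤ ∫ q, B (q.2 - q.1) (q.2 - q.1) ∂N := by
  have hN : ∀ᵐ q ∂N, q ∈ S ×ˢ S :=
    ae_mem_prod_of_fst_absolutelyContinuous_of_snd_eq hS.measurableSet hS.measurableSet
      ((Measure.absolutelyContinuous_of_le hNT).trans Measure.smul_absolutelyContinuous) hsnd hT
  rw [← sub_nonpos]
  refine nonpos_of_forall_mul_le_mul_sq (K := ‖B‖ * (2 * c * Metric.diam S) ^ 2) one_half_pos
    fun t ht ht' => ?_
  lift t to ℝ≥0 using ht.le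
  obtain ⟨s, hst⟩ : ∃ s, s + t = 1 :=
    ⟨1 - t, tsub_add_cancel_of_le (mod_cast ht'.trans one_half_lt_one.le)⟩
  have hs : 1 ≤ 2 * s := by
    have hst' : (s : ℝ) + t = 1 := mod_cast hst
    rw [← NNReal.coe_le_coe]
    push_cast
    linarith [hst']
  calc (t : ℝ) * (_ - _) ≤ ‖B‖ * (2 * c * Metric.diam S * t) ^ 2 :=
        hopt.mul_sub_integral_bilin_le hS hT hN hsnd hNT hst hs
    _ = ‖B‖ * (2 * c * Metric.diam S) ^ 2 * t ^ 2 := by ring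

end FirstOrderCondition

end Coupling

section Resample

variable {α β : Type*} [MeasurableSpace α] [MeasurableSpace β] {T : Measure (α × β)}
  {A : Set (α × β)} {ν : Measure α} {f : α × β → ℝ}

/-- The joint law obtained from `T` by redrawing, on the event `A`, the first coordinate from `ν`
independently of the second one. -/
noncomputable def resampleFst (T : Measure (α × β)) (A : Set (α × β)) (ν : Measure α) :
    Measure (α × β) :=
  T.restrict Aᶜ + ν.prod (T.restrict A).snd

theorem setIntegral_le_integral_prod_of_le_integral_resampleFst (hA : MeasurableSet A)
    (hf : Integrable f T) (hfν : Integrable f (ν.prod (T.restrict A).snd))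
    (h : ∫ q, f q ∂T ≤ ∫ q, f q ∂(resampleFst T A ν)) :
    ∫ q in A, f q ∂T ≤ ∫ q, f q ∂(ν.prod (T.restrict A).snd) := by
  rw [resampleFst, integral_add_measure hf.restrict hfν, ← integral_add_compl hA hf] at h
  linarith

theorem cond_le_smul {μ : Measure α} {C : Set α} (hC : μ C ≠ 0) :
    ProbabilityTheory.cond μ C ≤ (μ C)⁻¹.toNNReal • μ := by
  rw [ENNReal.smul_def, ENNReal.coe_toNNReal (ENNReal.inv_ne_top.2 hC), ProbabilityTheory.cond]
  gcongr
  exact Measure.restrict_le_self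

theorem ae_mem_prod_measure_prod {μ : Measure α} {η : Measure β} {s : Set α}
    {t : Set β} (hs : ∀ᵐ x ∂μ, x ∈ s) (ht : ∀ᵐ y ∂η, y ∈ t) :
    ∀ᵐ q ∂(μ.prod η), q ∈ s ×ˢ t := by
  filter_upwards [Measure.quasiMeasurePreserving_fst.ae hs,
    Measure.quasiMeasurePreserving_snd.ae ht] with q h₁ h₂ using ⟨h₁, h₂⟩

theorem fst_resampleFst_le [IsProbabilityMeasure T] {c : ℝ≥0} (hν : ν ≤ c • T.fst) :
    (resampleFst T A ν).fst ≤ (1 + c) • T.fst := by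
  have hmass : (T.restrict A).snd univ ≤ 1 := by
    rw [Measure.snd_univ, Measure.restrict_apply_univ]
    exact prob_le_one
  have hprod : (ν.prod (T.restrict A).snd).fst ≤ ν := by
    refine Measure.le_iff.2 fun s hs => ?_
    rw [Measure.fst_apply hs, ← prod_univ, Measure.prod_prod]
    exact mul_le_of_le_one_right' hmass
  calc (resampleFst T A ν).fst = (T.restrict Aᶜ).fst + (ν.prod (T.restrict A).snd).fst := by
        rw [resampleFst, Measure.fst_add]
    _ ≤ T.fst + c • T.fst :=
        add_le_add (Measure.fst_mono Measure.restrict_le_self) (hprod.trans hν)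
    _ = (1 + c) • T.fst := by rw [add_smul, one_smul]

variable [IsProbabilityMeasure ν]

theorem snd_resampleFst [SFinite T] (hA : MeasurableSet A) :
    (resampleFst T A ν).snd = T.snd := by
  rw [resampleFst, Measure.snd_add, Measure.snd_prod, ← Measure.snd_add,
    Measure.restrict_compl_add_restrict hA]

variable [IsProbabilityMeasure T]

theorem isProbabilityMeasure_resampleFst (hA : MeasurableSet A) :
    IsProbabilityMeasure (resampleFst T A ν) :=
  ⟨by rw [← Measure.snd_univ, snd_resampleFst hA, measure_univ]⟩

theorem setIntegral_le_mul_measureReal_of_forall_integral_le (hfm : Measurable f)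
    (hf : Integrable f T)
    (hmin : ∀ N : Measure (α × β), IsProbabilityMeasure N → N.snd = T.snd →
      ∀ c : ℝ≥0, N.fst ≤ c • T.fst → ∫ q, f q ∂T ≤ ∫ q, f q ∂N)
    {B : Set α} {V : Set β} (hB : MeasurableSet B) (hB₀ : T.fst B ≠ 0) (hV : MeasurableSet V)
    (hA : MeasurableSet A) (hAV : A ⊆ Prod.snd ⁻¹' V) {l r : ℝ} (hBV : B ×ˢ V ⊆ f ⁻¹' Icc l r) :
    ∫ q in A, f q ∂T ≤ r * T.real A := by
  set ν := ProbabilityTheory.cond T.fst B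
  have : IsProbabilityMeasure ν := ProbabilityTheory.cond_isProbabilityMeasure hB₀
  have hAV' : ∀ᵐ y ∂(T.restrict A).snd, y ∈ V :=
    (ae_map_iff measurable_snd.aemeasurable hV).2 ((ae_restrict_mem hA).mono hAV)
  have hprod : ∀ᵐ z ∂(ν.prod (T.restrict A).snd), f z ∈ Icc l r :=
    (ae_mem_prod_measure_prod (ProbabilityTheory.ae_cond_mem hB) hAV').mono hBV
  have hfprod : Integrable f (ν.prod (T.restrict A).snd) :=
    Integrable.of_mem_Icc _ _ hfm.aemeasurable hprod
  have hmass : (ν.prod (T.restrict A).snd).real univ = T.real A := by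
    rw [measureReal_def, ← Measure.snd_univ, Measure.snd_prod, Measure.snd_univ,
      Measure.restrict_apply_univ, measureReal_def]
  calc ∫ z in A, f z ∂T ≤ ∫ z, f z ∂(ν.prod (T.restrict A).snd) :=
        setIntegral_le_integral_prod_of_le_integral_resampleFst hA hf hfprod
          (hmin _ (isProbabilityMeasure_resampleFst hA) (snd_resampleFst hA) _
            (fst_resampleFst_le (cond_le_smul hB₀)))
    _ ≤ ∫ _, r ∂(ν.prod (T.restrict A).snd) :=
        integral_mono_ae hfprod (integrable_const _) (hprod.mono fun _ hz => hz.2)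
    _ = r * T.real A := by rw [integral_const, hmass, smul_eq_mul, mul_comm]

/-- A minimality property under resampling becomes pointwise on the support: redraw the first
coordinate near `p` from its values near `q.1`. -/
theorem le_of_forall_integral_le_of_mem_support [TopologicalSpace α] [TopologicalSpace β]
    [OpensMeasurableSpace α] [OpensMeasurableSpace β] [OpensMeasurableSpace (α × β)]
    (hfc : Continuous f) (hf : Integrable f T)
    (hmin : ∀ N : Measure (α × β), IsProbabilityMeasure N → N.snd = T.snd →
      ∀ c : ℝ≥0, N.fst ≤ c • T.fst → ∫ q, f q ∂T ≤ ∫ q, f q ∂N)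
    {p q : α × β} (hp : p ∈ T.support) (hq : q ∈ T.support) : f p ≤ f (q.1, p.2) := by
  by_contra! hlt
  obtain ⟨r, hr, hrp⟩ := exists_between hlt
  obtain ⟨r', hr', hr'r⟩ := exists_between hr
  obtain ⟨B, V, hBo, hVo, hqB, hpV, hBV⟩ := isOpen_prod_iff.1
    (isOpen_Ioo.preimage hfc) q.1 p.2 (⟨sub_one_lt _, hr'⟩ : f (q.1, p.2) ∈ Ioo _ r')
  have hB : T.fst B ≠ 0 := by
    rw [Measure.fst_apply hBo.measurableSet]
    exact ((Measure.mem_support_iff_forall _).1 hq _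
      ((hBo.preimage continuous_fst).mem_nhds hqB)).ne'
  set A : Set (α × β) := f ⁻¹' Ioi r ∩ Prod.snd ⁻¹' V
  have hAo : IsOpen A := (isOpen_Ioi.preimage hfc).inter (hVo.preimage continuous_snd)
  have hA : 0 < T.real A := ENNReal.toReal_pos
    ((Measure.mem_support_iff_forall _).1 hp _ (hAo.mem_nhds ⟨hrp, hpV⟩)).ne' (measure_ne_top _ _)
  have hupper : ∫ z in A, f z ∂T ≤ r' * T.real A :=
    setIntegral_le_mul_measureReal_of_forall_integral_le hfc.measurable hf hmin hBo.measurableSet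
      hB hVo.measurableSet hAo.measurableSet inter_subset_right
      (hBV.trans (preimage_mono Ioo_subset_Icc_self))
  have hlower : r * T.real A ≤ ∫ z in A, f z ∂T :=
    setIntegral_ge_of_const_le_real hAo.measurableSet (measure_ne_top _ _) (fun _ hz => hz.1.le)
      hf.integrableOn
  exact hr'r.not_ge (le_of_mul_le_mul_right (hlower.trans hupper) hA)

end Resample

section SupportInequalities

variable {E : Type*} [NormedAddCommGroup E] [NormedSpace ℝ E] [CompleteSpace E]
  [MeasurableSpace E] [BorelSpace E] [SecondCountableTopology E] {B : E →L[ℝ] E →L[ℝ] ℝ}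
  {S : Set E} {T : Measure (E × E)} [IsProbabilityMeasure T] {p q : E × E}

theorem IsOptimalCoupling.bilin_snd_sub_fst_le (hopt : IsOptimalCoupling B T) (hS : IsCompact S)
    (hT : ∀ᵐ q ∂T, q ∈ S ×ˢ S) (hp : p ∈ T.support) (hq : q ∈ T.support) :
    B (p.2 - p.1) (p.2 - p.1) ≤ B (p.2 - q.1) (p.2 - q.1) := by
  have hres : MemLp (fun q => q.2 - q.1) 2 T :=
    (memLp_snd_of_ae_mem_prod hS 2 hT).sub (memLp_fst_of_ae_mem_prod hS 2 hT)
  have hcont : Continuous fun q : E × E => q.2 - q.1 := continuous_snd.sub continuous_fst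
  exact le_of_forall_integral_le_of_mem_support (f := fun q => B (q.2 - q.1) (q.2 - q.1))
    (B.continuous₂.comp (hcont.prodMk hcont)) (integrable_bilin B hres hres)
    (fun N _ hsnd _ hNT => hopt.integral_bilin_le hS hT hsnd hNT) hp hq

theorem IsOptimalCoupling.bilin_sub_add_bilin_sub_nonneg (hopt : IsOptimalCoupling B T)
    (hS : IsCompact S) (hT : ∀ᵐ q ∂T, q ∈ S ×ˢ S) (hp : p ∈ T.support) (hq : q ∈ T.support) :
    0 ≤ B (p.2 - q.2) (p.1 - q.1) + B (p.1 - q.1) (p.2 - q.2) := by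
  have hpq := hopt.bilin_snd_sub_fst_le hS hT hp hq
  have hqp := hopt.bilin_snd_sub_fst_le hS hT hq hp
  simp only [map_sub, sub_apply] at hpq hqp ⊢
  linarith

theorem IsOptimalCoupling.bilin_fst_sub_fst_nonneg (hopt : IsOptimalCoupling B T)
    (hS : IsCompact S) (hT : ∀ᵐ q ∂T, q ∈ S ×ˢ S) (hp : p ∈ T.support) (hq : q ∈ T.support) :
    0 ≤ B (p.1 - q.1) (p.1 - q.1) := by
  have hcont : Continuous fun p : E × E => p.1 - q.1 := continuous_fst.sub continuous_const
  have hclosed : IsClosed {p : E × E | 0 ≤ B (p.1 - q.1) (p.1 - q.1)} :=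
    isClosed_Ici.preimage (B.continuous₂.comp (hcont.prodMk hcont))
  refine Measure.support_subset_of_isClosed hclosed ?_ hp
  have hgap : 0 ≤ᵐ[T] fun p => B (p.2 - q.1) (p.2 - q.1)
      - B (p.2 - posteriorMean T p) (p.2 - posteriorMean T p) := by
    filter_upwards [Measure.support_mem_ae, hopt.isPosteriorMeanCoupling] with p hp hmean
    rw [hmean, Pi.zero_apply, sub_nonneg]
    exact hopt.bilin_snd_sub_fst_le hS hT hp hq
  filter_upwards [condExp_nonneg hgap, hopt.isPosteriorMeanCoupling,
    condExp_bilin_sub_sub_bilin_sub_condExp B measurable_fst.comap_le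
      (memLp_snd_of_ae_mem_prod hS 2 hT) (memLp_const q.1) stronglyMeasurable_const]
    with p hp hmean hpyth
  rw [← hmean]
  exact hp.trans_eq hpyth

end SupportInequalities

section Constancy

variable {E : Type*} [NormedAddCommGroup E] [NormedSpace ℝ E]

theorem eqOn_const_of_isBigO_norm_sub_sq {F : Type*} [NormedAddCommGroup F] [NormedSpace ℝ F]
    {U : Set E} (hU : IsOpen U) (hU' : IsPreconnected U) {h : E → F}
    (hh : ∀ x ∈ U, (fun y => h y - h x) =O[𝓝 x] fun y => ‖y - x‖ ^ 2) :
    ∃ b, ∀ x ∈ U, h x = b := by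
  have hderiv : ∀ x ∈ U, HasFDerivAt h (0 : E →L[ℝ] F) x := fun x hx =>
    (hasFDerivAt_sub_const_iff (h x)).1 ((hh x hx).hasFDerivAt one_lt_two)
  exact hU.exists_is_const_of_fderiv_eq_zero hU'
    (fun x hx => (hderiv x hx).differentiableAt.differentiableWithinAt)
    fun x hx => (hderiv x hx).fderiv

variable {θ s : E →L[ℝ] ℝ} {u : E} {S : Set E} {h : E → ℝ}

theorem eventually_mul_sub_le_sq (hθu : θ u = 0) (hsu : s u ≠ 0)
    (hmono : ∀ w ∈ S, ∀ w' ∈ S, (s w - s w') * (h w - h w') ≤ (θ w - θ w') ^ 2)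
    (hfiber : ∀ w ∈ S, ∀ w' ∈ S, θ w = θ w' → h w = h w') {w₀ : E} (hw₀ : w₀ ∈ interior S) {c : ℝ}
    (hc : w₀ + c • u ∈ interior S) :
    ∀ᶠ w in 𝓝 w₀, c * s u * (h w - h w₀) ≤ (θ w - θ w₀) ^ 2 := by
  set shift : E → E := fun w => w + (c - (s w - s w₀) / s u) • u
  have hshift : Tendsto shift (𝓝 w₀) (𝓝 (w₀ + c • u)) := by
    have hcont : Continuous shift := by fun_prop
    simpa [shift] using hcont.tendsto w₀
  filter_upwards [hshift (mem_interior_iff_mem_nhds.1 hc), mem_interior_iff_mem_nhds.1 hw₀]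
    with w hwshift hw
  have hθ : θ (shift w) = θ w := by simp [shift, hθu]
  have hs : s (shift w) - s w₀ = c * s u := by
    simp only [shift, map_add, map_smul, smul_eq_mul]
    field_simp
    ring
  have := hmono _ hwshift w₀ (interior_subset hw₀)
  rwa [hθ, hs, hfiber _ hwshift w hw hθ] at this

theorem isBigO_norm_sub_sq_of_mul_sub_le_sq (hθu : θ u = 0) (hsu : s u ≠ 0)
    (hmono : ∀ w ∈ S, ∀ w' ∈ S, (s w - s w') * (h w - h w') ≤ (θ w - θ w') ^ 2)
    (hfiber : ∀ w ∈ S, ∀ w' ∈ S, θ w = θ w' → h w = h w') {w₀ : E} (hw₀ : w₀ ∈ interior S) :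
    (fun w => h w - h w₀) =O[𝓝 w₀] fun w => ‖w - w₀‖ ^ 2 := by
  have hline : ∀ᶠ c : ℝ in 𝓝 0, w₀ + c • u ∈ interior S := by
    have hcont : Continuous fun c : ℝ => w₀ + c • u := by fun_prop
    exact hcont.tendsto 0 (isOpen_interior.mem_nhds (by simpa using hw₀))
  have hline' : ∀ᶠ c : ℝ in 𝓝 0, w₀ + (-c) • u ∈ interior S :=
    (continuous_neg.tendsto' 0 0 neg_zero).eventually hline
  obtain ⟨c, ⟨hpos, hneg⟩, hc⟩ := ((hline.and hline').filter_mono nhdsWithin_le_nhds).and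
    (self_mem_nhdsWithin (s := {0}ᶜ)) |>.exists
  refine Asymptotics.IsBigO.of_bound (‖θ‖ ^ 2 / |c * s u|) ?_
  filter_upwards [eventually_mul_sub_le_sq hθu hsu hmono hfiber hw₀ hpos,
    eventually_mul_sub_le_sq hθu hsu hmono hfiber hw₀ hneg] with w hw hw'
  rw [Real.norm_eq_abs, norm_pow, norm_norm, div_mul_eq_mul_div,
    le_div_iff₀ (abs_pos.2 (mul_ne_zero hc hsu)), mul_comm, ← abs_mul, ← mul_pow]
  calc |c * s u * (h w - h w₀)| ≤ (θ w - θ w₀) ^ 2 := abs_le'.2 ⟨hw, by linarith⟩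
    _ = ‖θ (w - w₀)‖ ^ 2 := by rw [map_sub, Real.norm_eq_abs, sq_abs]
    _ ≤ (‖θ‖ * ‖w - w₀‖) ^ 2 := by gcongr; exact θ.le_opNorm _

/-- Along `u` the function `h` does not change while `s` does, so the first inequality can be
used with the increment of `s` bounded away from zero: then `h` has zero derivative. -/
theorem exists_eq_const_of_mul_sub_le_sq (hθu : θ u = 0) (hsu : s u ≠ 0) (hS : Convex ℝ S)
    (hSint : (interior S).Nonempty)
    (hmono : ∀ w ∈ S, ∀ w' ∈ S, (s w - s w') * (h w - h w') ≤ (θ w - θ w') ^ 2)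
    (hLip : ∀ w ∈ S, ∀ w' ∈ S, |h w - h w'| ≤ |θ w - θ w'|) : ∃ b, ∀ w ∈ S, h w = b := by
  have hfiber : ∀ w ∈ S, ∀ w' ∈ S, θ w = θ w' → h w = h w' := fun w hw w' hw' hθ =>
    sub_eq_zero.1 (abs_nonpos_iff.1 (by simpa [hθ] using hLip w hw w' hw'))
  have hcont : ContinuousOn h S := by
    intro w hw
    rw [ContinuousWithinAt, tendsto_iff_dist_tendsto_zero]
    have hθ : Tendsto (fun w' => |θ w' - θ w|) (𝓝[S] w) (𝓝 0) := by
      have hcont : Continuous fun w' => |θ w' - θ w| := by fun_prop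
      simpa using hcont.continuousWithinAt.tendsto (x := w) (s := S)
    exact squeeze_zero' (Eventually.of_forall fun _ => dist_nonneg)
      (eventually_mem_nhdsWithin.mono fun w' hw' => hLip w' hw' w hw) hθ
  obtain ⟨b, hb⟩ := eqOn_const_of_isBigO_norm_sub_sq isOpen_interior hS.interior.isPreconnected
    fun w hw => isBigO_norm_sub_sq_of_mul_sub_le_sq hθu hsu hmono hfiber hw
  refine ⟨b, Set.EqOn.of_subset_closure hb hcont continuousOn_const interior_subset ?_⟩
  rw [hS.closure_interior_eq_closure_of_nonempty_interior hSint]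
  exact subset_closure

end Constancy

section MomentPersuasion

variable {E : Type*} [NormedAddCommGroup E] [NormedSpace ℝ E] [MeasurableSpace E]

/-- `G` attains the value of the moment persuasion problem on `S` with prior `μ` and objective
`v`: no probability measure on `S` below `μ` in the convex order does better. Feasibility of `G`
is not part of the notion. -/
def IsMomentOptimal (S : Set E) (v : E → ℝ) (μ G : Measure E) : Prop :=
  ∀ G' : Measure E, IsProbabilityMeasure G' → G' S = 1 →
    (∀ φ : E → ℝ, ContinuousOn φ S → ConvexOn ℝ S φ → ∫ z, φ z ∂G' ≤ ∫ z, φ z ∂μ) →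
    ∫ z, v z ∂G' ≤ ∫ z, v z ∂G

/-- The posterior mean of the state under the prior `μ` when `θ` is revealed. -/
noncomputable def revelationMean {β : Type*} [MeasurableSpace β] (μ : Measure E) (θ : E → β) :
    E → E :=
  μ[fun ω => ω | MeasurableSpace.comap θ inferInstance]

/-- The joint law of the posterior mean and the state when `θ` is revealed. -/
noncomputable def revelationCoupling {β : Type*} [MeasurableSpace β] (μ : Measure E) (θ : E → β) :
    Measure (E × E) :=
  μ.map fun ω => (revelationMean μ θ ω, ω)

variable {β : Type*} [MeasurableSpace β] {μ : Measure E} {θ : E → β} {S : Set E}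

theorem fst_revelationCoupling : (revelationCoupling μ θ).fst = μ.map (revelationMean μ θ) :=
  Measure.fst_map_prodMk measurable_id

variable [BorelSpace E]

theorem measurable_revelationMean (hθ : Measurable θ) : Measurable (revelationMean μ θ) :=
  (stronglyMeasurable_condExp.mono hθ.comap_le).measurable

theorem snd_revelationCoupling (hθ : Measurable θ) : (revelationCoupling μ θ).snd = μ := by
  rw [revelationCoupling, Measure.snd_map_prodMk (measurable_revelationMean hθ), Measure.map_id']

variable [CompleteSpace E] [SecondCountableTopology E] [IsFiniteMeasure μ]

theorem ae_mem_prod_revelationCoupling (hθ : Measurable θ) (hS : IsCompact S)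
    (hSconv : Convex ℝ S) (hμ : ∀ᵐ ω ∂μ, ω ∈ S) :
    ∀ᵐ p ∂revelationCoupling μ θ, p ∈ S ×ˢ S := by
  refine (ae_map_iff ((measurable_revelationMean hθ).prodMk measurable_id).aemeasurable
    (hS.measurableSet.prod hS.measurableSet)).2 ?_
  exact (hSconv.condExp_mem hθ.comap_le (integrable_of_ae_mem_isCompact hS aemeasurable_id' hμ)
    hS.isClosed hμ).and hμ

theorem apply_fst_eq_apply_snd_of_mem_support_revelationCoupling {F : Type*}
    [NormedAddCommGroup F] [NormedSpace ℝ F] [CompleteSpace F] [MeasurableSpace F] [BorelSpace F]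
    [SecondCountableTopology F] (θ : E →L[ℝ] F) (hint : Integrable (fun ω => ω) μ) {p : E × E}
    (hp : p ∈ (revelationCoupling μ θ).support) : θ p.1 = θ p.2 := by
  have hclosed : IsClosed {p : E × E | θ p.1 = θ p.2} :=
    isClosed_eq (θ.continuous.comp continuous_fst) (θ.continuous.comp continuous_snd)
  refine Measure.support_subset_of_isClosed hclosed ?_ hp
  refine (ae_map_iff ((measurable_revelationMean θ.measurable).prodMk measurable_id).aemeasurable
    hclosed.measurableSet).2 ?_
  have hθ : μ[θ ∘ fun ω => ω | MeasurableSpace.comap θ inferInstance] = θ :=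
    condExp_of_stronglyMeasurable θ.measurable.comap_le (comap_measurable θ).stronglyMeasurable
      (θ.integrable_comp hint)
  exact (θ.comp_condExp_comm hint).trans (.of_eq hθ)

theorem IsMomentOptimal.isOptimalCoupling {μ : Measure E} [IsProbabilityMeasure μ]
    {B : E →L[ℝ] E →L[ℝ] ℝ} (hθ : Measurable θ) (hS : IsCompact S) (hSconv : Convex ℝ S)
    (hμ : ∀ᵐ ω ∂μ, ω ∈ S)
    (hopt : IsMomentOptimal S (fun z => B z z) μ (μ.map (revelationMean μ θ))) :
    IsOptimalCoupling B (revelationCoupling μ θ) where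
  isPosteriorMeanCoupling := isPosteriorMeanCoupling_map_condExp hθ.comap_le measurable_id
    (integrable_of_ae_mem_isCompact hS aemeasurable_id' hμ)
  integral_le ρ _ hsnd := by
    rw [snd_revelationCoupling hθ] at hsnd
    have hρS : ∀ᵐ q ∂ρ, q.2 ∈ S := by
      rw [← hsnd] at hμ
      exact ae_of_ae_map measurable_snd.aemeasurable hμ
    have hsndint : Integrable Prod.snd ρ :=
      integrable_of_ae_mem_isCompact hS measurable_snd.aemeasurable hρS
    have hmean : AEMeasurable (posteriorMean ρ) ρ :=
      integrable_condExp.aestronglyMeasurable.aemeasurable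
    have hB : StronglyMeasurable fun w => B w w :=
      (B.continuous₂.comp (continuous_id.prodMk continuous_id)).stronglyMeasurable
    have hmem : ρ.map (posteriorMean ρ) S = 1 := by
      rw [Measure.map_apply_of_aemeasurable hmean hS.measurableSet, ← measure_univ (μ := ρ)]
      exact measure_congr (eventuallyEq_univ.2
        (hSconv.condExp_mem measurable_fst.comap_le hsndint hS.isClosed hρS))
    have hle := hopt _ (Measure.isProbabilityMeasure_map hmean) hmem fun φ hφ hφc => by
      rw [← hsnd]
      exact integral_map_condExp_le measurable_fst.comap_le hS hφ hφc
        measurable_snd.aemeasurable hρS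
    rwa [← fst_revelationCoupling, integral_map hmean hB.aestronglyMeasurable, Measure.fst,
      integral_map measurable_fst.aemeasurable hB.aestronglyMeasurable] at hle

end MomentPersuasion

section Necessity

variable {E : Type*} [NormedAddCommGroup E] [NormedSpace ℝ E]

/-- The bilinear form whose quadratic form is `κ * (θ ^ 2 - s ^ 2)`. -/
noncomputable def diffSqForm (κ : ℝ) (θ s : E →L[ℝ] ℝ) : E →L[ℝ] E →L[ℝ] ℝ :=
  κ • (θ.smulRight θ - s.smulRight s)

theorem diffSqForm_apply (κ : ℝ) (θ s : E →L[ℝ] ℝ) (x y : E) :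
    diffSqForm κ θ s x y = κ * (θ x * θ y - s x * s y) := by
  simp [diffSqForm]

variable [CompleteSpace E] [MeasurableSpace E] [BorelSpace E] [SecondCountableTopology E]
  {S : Set E} {κ : ℝ} {θ s : E →L[ℝ] ℝ} {u : E}

/-- By the Lipschitz bound `hLip`, the value of `s` at a supported signal depends only on the state,
so it can be studied as a function on `S`. -/
theorem IsOptimalCoupling.exists_forall_apply_fst_eq {T : Measure (E × E)} [IsProbabilityMeasure T]
    (hopt : IsOptimalCoupling (diffSqForm κ θ s) T) (hκ : 0 < κ) (hS : IsCompact S)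
    (hSconv : Convex ℝ S) (hSint : (interior S).Nonempty) (hT : ∀ᵐ p ∂T, p ∈ S ×ˢ S)
    (hsnd : T.snd.support = S) (hθ : ∀ p ∈ T.support, θ p.1 = θ p.2) (hθu : θ u = 0)
    (hsu : s u ≠ 0) : ∃ b, ∀ p ∈ T.support, s p.1 = b := by
  have hmono : ∀ p ∈ T.support, ∀ q ∈ T.support,
      (s p.2 - s q.2) * (s p.1 - s q.1) ≤ (θ p.2 - θ q.2) ^ 2 := by
    intro p hp q hq
    have h := hopt.bilin_sub_add_bilin_sub_nonneg hS hT hp hq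
    rw [diffSqForm_apply, diffSqForm_apply, ← mul_add] at h
    simp only [map_sub, hθ p hp, hθ q hq] at h
    linarith [(mul_nonneg_iff_of_pos_left hκ).1 h]
  have hLip : ∀ p ∈ T.support, ∀ q ∈ T.support, |s p.1 - s q.1| ≤ |θ p.2 - θ q.2| := by
    intro p hp q hq
    have h := hopt.bilin_fst_sub_fst_nonneg hS hT hp hq
    rw [diffSqForm_apply] at h
    simp only [map_sub, hθ p hp, hθ q hq] at h
    exact abs_le_iff_mul_self_le.2 (sub_nonneg.1 ((mul_nonneg_iff_of_pos_left hκ).1 h))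
  have hsupp : T.support ⊆ S ×ˢ S :=
    Measure.support_subset_of_isClosed (hS.isClosed.prod hS.isClosed) hT
  have hsuppc : IsCompact T.support :=
    (hS.prod hS).of_isClosed_subset Measure.isClosed_support hsupp
  have hsurj : ∀ w ∈ S, ∃ p ∈ T.support, p.2 = w := fun w hw =>
    support_map_subset_image_support hsuppc continuous_snd measurable_snd
      (hsnd.symm ▸ hw : w ∈ T.snd.support)
  choose! σ hσ hσ₂ using hsurj
  obtain ⟨b, hb⟩ := exists_eq_const_of_mul_sub_le_sq (h := fun w => s (σ w).1) hθu hsu hSconv hSint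
    (fun w hw w' hw' => by simpa only [hσ₂ w hw, hσ₂ w' hw'] using hmono _ (hσ w hw) _ (hσ w' hw'))
    (fun w hw w' hw' => by simpa only [hσ₂ w hw, hσ₂ w' hw'] using hLip _ (hσ w hw) _ (hσ w' hw'))
  refine ⟨b, fun p hp => ?_⟩
  have hpS : p.2 ∈ S := (hsupp hp).2
  rw [← hb p.2 hpS, ← sub_eq_zero, ← abs_nonpos_iff]
  simpa [hσ₂ p.2 hpS] using hLip p hp _ (hσ p.2 hpS)

theorem two_dim_revelation_optimal_necessity_general (hS : IsCompact S) (hSconv : Convex ℝ S)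
    (hSint : (interior S).Nonempty) {μ : Measure E} [IsProbabilityMeasure μ] (hμ : μ.support = S)
    (hκ : 0 < κ) (hθu : θ u = 0) (hsu : s u ≠ 0)
    (hopt : IsMomentOptimal S (fun z => κ * (θ z ^ 2 - s z ^ 2)) μ (μ.map (revelationMean μ θ))) :
    ∃ b, (μ.map (revelationMean μ θ)).support ⊆ {z | s z = b} := by
  have hμS : ∀ᵐ ω ∂μ, ω ∈ S := hμ ▸ Measure.support_mem_ae
  have hθm : Measurable θ := θ.measurable
  have hpair : Measurable fun ω => (revelationMean μ θ ω, ω) :=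
    (measurable_revelationMean hθm).prodMk measurable_id
  have : IsProbabilityMeasure (revelationCoupling μ θ) :=
    Measure.isProbabilityMeasure_map hpair.aemeasurable
  have hopt' : IsOptimalCoupling (diffSqForm κ θ s) (revelationCoupling μ θ) :=
    IsMomentOptimal.isOptimalCoupling hθm hS hSconv hμS
      (by simpa only [diffSqForm_apply, ← pow_two] using hopt)
  obtain ⟨b, hb⟩ := hopt'.exists_forall_apply_fst_eq hκ hS hSconv hSint
    (ae_mem_prod_revelationCoupling hθm hS hSconv hμS) (by rw [snd_revelationCoupling hθm, hμ])
    (fun p hp => apply_fst_eq_apply_snd_of_mem_support_revelationCoupling θ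
      (integrable_of_ae_mem_isCompact hS aemeasurable_id' hμS) hp) hθu hsu
  have hclosed : IsClosed {z | s z = b} := isClosed_eq s.continuous continuous_const
  refine ⟨b, Measure.support_subset_of_isClosed hclosed ?_⟩
  rw [mem_ae_map_iff (measurable_revelationMean hθm).aemeasurable hclosed.measurableSet]
  exact (ae_of_ae_map hpair.aemeasurable Measure.support_mem_ae).mono fun ω hω => hb _ hω

end Necessity

/-- **Two-dimensional moment persuasion, necessity** (Proposition 2, "only if" direction):
assume additionally that `Ω` is convex with non-empty interior.  Let `a > 0` and let `G` be the
law of the posterior mean `x = E[ω | ω₂ + aω₁]` induced by revealing `ω₂ + aω₁`.  If `G` is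
optimal for (P_m), then the support of `G` lies in a line `{x₂ = a x₁ + b}` for some `b`. -/
theorem two_dim_revelation_optimal_necessity
    (S : Set (ℝ × ℝ)) (hScomp : IsCompact S)
    (hSpos : ∀ ω ∈ S, 0 ≤ ω.1 ∧ 0 ≤ ω.2)
    (hSconv : Convex ℝ S) (hSint : (interior S).Nonempty)
    (F₀ : Measure (ℝ × ℝ)) [IsProbabilityMeasure F₀]
    (hF₀supp : msupport F₀ = S)
    (X : Set (ℝ × ℝ)) (hX : X = convexHull ℝ S)
    (a : ℝ) (ha : 0 < a)
    (x : ℝ × ℝ → ℝ × ℝ)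
    (hx : x = F₀[(fun ω : ℝ × ℝ => ω) |
      MeasurableSpace.comap (fun ω : ℝ × ℝ => ω.2 + a * ω.1) inferInstance])
    (G : Measure (ℝ × ℝ)) (hG : G = Measure.map x F₀)
    (hopt : ∀ G' : Measure (ℝ × ℝ), IsProbabilityMeasure G' → G' X = 1 →
      (∀ φ : ℝ × ℝ → ℝ, ContinuousOn φ X → ConvexOn ℝ X φ →
        ∫ z, φ z ∂G' ≤ ∫ z, φ z ∂F₀) →
      ∫ z, z.1 * z.2 ∂G' ≤ ∫ z, z.1 * z.2 ∂G) :
    ∃ b : ℝ, msupport G ⊆ {z : ℝ × ℝ | z.2 = a * z.1 + b} := by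
  subst hX hx hG
  rw [hSconv.convexHull_eq] at hopt
  simp only [msupport_eq_support] at hF₀supp ⊢
  let θ : ℝ × ℝ →L[ℝ] ℝ := .snd ℝ ℝ ℝ + a • .fst ℝ ℝ ℝ
  let s : ℝ × ℝ →L[ℝ] ℝ := .snd ℝ ℝ ℝ - a • .fst ℝ ℝ ℝ
  have hv : (fun z : ℝ × ℝ => z.1 * z.2) = fun z => (4 * a)⁻¹ * (θ z ^ 2 - s z ^ 2) := by
    ext z
    simp only [θ, s, add_apply, sub_apply, smul_apply, ContinuousLinearMap.coe_fst',
      ContinuousLinearMap.coe_snd', smul_eq_mul]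
    field_simp
    ring
  have hopt' : IsMomentOptimal S (fun z => (4 * a)⁻¹ * (θ z ^ 2 - s z ^ 2)) F₀
      (F₀.map (revelationMean F₀ θ)) := hv ▸ hopt
  obtain ⟨b, hb⟩ := two_dim_revelation_optimal_necessity_general (u := (-1, a)) hScomp hSconv
    hSint hF₀supp (by positivity) (by simp [θ]) (by simp [s, ha.ne']) hopt'
  exact ⟨b, fun z hz => eq_add_of_sub_eq' (hb hz)⟩
end

section
/- If the objective V : Δ(Ω) → ℝ is Lipschitz continuous with respect to the Kantorovich–Rubinstein distance d, then the concave closure V̂ has bounded steepness at μ₀: there exists a constant L such that V̂(μ) − V̂(μ₀) ≤ L·d(μ, μ₀) for all μ ∈ Δ(Ω). -/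
open MeasureTheory

/-- Convex combination `t μ + (1 - t) η` of two probability measures. -/
noncomputable def mix {Ω : Type*} [MeasurableSpace Ω] (t : NNReal) (ht : t ≤ 1)
    (μ η : ProbabilityMeasure Ω) : ProbabilityMeasure Ω :=
  ⟨t • (μ : Measure Ω) + (1 - t) • (η : Measure Ω), by
    constructor
    simp only [Measure.coe_add, Pi.add_apply, Measure.smul_apply, smul_eq_mul,
      measure_univ, mul_one, ENNReal.smul_def]
    rw [← ENNReal.coe_add, add_tsub_cancel_of_le ht, ENNReal.coe_one]⟩

/-- A function `H : Δ(Ω) → ℝ` is affine if it respects convex combinations. -/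
def IsAffine {Ω : Type*} [MeasurableSpace Ω] (H : ProbabilityMeasure Ω → ℝ) : Prop :=
  ∀ (μ η : ProbabilityMeasure Ω) (t : NNReal) (ht : t ≤ 1),
    H (mix t ht μ η) = (t : ℝ) * H μ + (1 - (t : ℝ)) * H η

/-- The concave closure `V̂(μ) = inf {H(μ) : H affine continuous, H ≥ V}`. -/
noncomputable def concaveClosure {Ω : Type*} [MeasurableSpace Ω] [TopologicalSpace Ω]
    [OpensMeasurableSpace Ω] (V : ProbabilityMeasure Ω → ℝ) (μ : ProbabilityMeasure Ω) : ℝ :=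
  sInf {r : ℝ | ∃ H : ProbabilityMeasure Ω → ℝ,
    Continuous H ∧ IsAffine H ∧ (∀ μ', V μ' ≤ H μ') ∧ r = H μ}

/-- The Kantorovich–Rubinstein distance between two (finite) measures:
`d(μ, η) = sup {∫ f dμ − ∫ f dη : f 1-Lipschitz, sup |f| ≤ 1}`. -/
noncomputable def krDist {Ω : Type*} [MeasurableSpace Ω] [PseudoMetricSpace Ω]
    (μ η : Measure Ω) : ℝ :=
  sSup {r : ℝ | ∃ f : Ω → ℝ, LipschitzWith 1 f ∧ (∀ ω, |f ω| ≤ 1) ∧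
    r = ∫ ω, f ω ∂μ - ∫ ω, f ω ∂η}

/-! An affine continuous functional on `Δ(Ω)` is bounded, and it agrees on finitely supported
measures, hence by density everywhere, with integration of the continuous function `h` of its values
at Dirac masses. Suppose `∫ h dν ≥ V ν` for all `ν`, with `V` Lipschitz of constant `K`, and let
`g x = inf_y (h y + K c(x, y))` for the cost `c = min(dist, 2)`. Then `g ≤ h`, and integration of
`g` still majorises `V`: if a measurable map `T` picks `ε`-optimal points `y = T x`, transport along
`T` bounds the distance from `ν` to its image `T_* ν` by `∫ c(x, T x) dν`, so
`V ν ≤ V (T_* ν) + K ∫ c(x, T x) dν ≤ ∫ (h (T x) + K c(x, T x)) dν ≤ ∫ g dν + ε`.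
Since `g` is `K`-Lipschitz for `c`, `V̂ μ ≤ ∫ g dμ ≤ ∫ g dη + K d(μ, η) ≤ ∫ h dη + K d(μ, η)`, and
the infimum over `h` gives `V̂ μ ≤ V̂ η + K d(μ, η)`.
-/

open Filter Topology Set TopologicalSpace
open scoped NNReal BoundedContinuousFunction

section Affine

variable {Ω : Type*} [MeasurableSpace Ω]

lemma coe_mix (t : ℝ≥0) (ht : t ≤ 1) (μ η : ProbabilityMeasure Ω) :
    (mix t ht μ η : Measure Ω) = t • (μ : Measure Ω) + (1 - t) • (η : Measure Ω) :=
  rfl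

lemma integral_mix {f : Ω → ℝ} {t : ℝ≥0} (ht : t ≤ 1) {μ η : ProbabilityMeasure Ω}
    (hμ : Integrable f μ) (hη : Integrable f η) :
    ∫ ω, f ω ∂(mix t ht μ η : Measure Ω) =
      (t : ℝ) * ∫ ω, f ω ∂(μ : Measure Ω) + (1 - (t : ℝ)) * ∫ ω, f ω ∂(η : Measure Ω) := by
  rw [coe_mix, integral_add_measure hμ.smul_measure_nnreal hη.smul_measure_nnreal,
    integral_smul_nnreal_measure, integral_smul_nnreal_measure, NNReal.smul_def, NNReal.smul_def,
    NNReal.coe_sub ht, smul_eq_mul, smul_eq_mul, NNReal.coe_one]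

lemma IsAffine.mul_apply_eq_add {H : ProbabilityMeasure Ω → ℝ} (hH : IsAffine H)
    {a b c : ℝ≥0} {μ η ν : ProbabilityMeasure Ω}
    (hν : c • (ν : Measure Ω) = a • (μ : Measure Ω) + b • (η : Measure Ω)) :
    c * H ν = a * H μ + b * H η := by
  have hmass : c = a + b := by
    rw [← ENNReal.coe_inj]
    simpa using congrArg (fun m : Measure Ω => m univ) hν
  obtain rfl | hc := eq_or_ne c 0
  · obtain ⟨rfl, rfl⟩ : a = 0 ∧ b = 0 := add_eq_zero.1 hmass.symm
    simp
  have ha : a / c ≤ 1 := div_le_one_of_le₀ (hmass ▸ le_self_add) zero_le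
  have hb : 1 - a / c = b / c := tsub_eq_of_eq_add_rev (by rw [← add_div, ← hmass, div_self hc])
  have hmix : ν = mix (a / c) ha μ η := ProbabilityMeasure.toMeasure_injective <| by
    rw [coe_mix, hb, div_eq_inv_mul, div_eq_inv_mul, mul_smul, mul_smul, ← smul_add, ← hν,
      inv_smul_smul₀ hc]
  rw [hmix, hH, ← NNReal.coe_one, ← NNReal.coe_sub ha, hb]
  push_cast
  field_simp

lemma IsAffine.mul_apply_eq_sum {H : ProbabilityMeasure Ω → ℝ} (hH : IsAffine H) {ι : Type*}
    {s : Finset ι} {w : ι → ℝ≥0} {ρ : ι → ProbabilityMeasure Ω} {c : ℝ≥0}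
    {ν : ProbabilityMeasure Ω}
    (hν : c • (ν : Measure Ω) = ∑ i ∈ s, w i • (ρ i : Measure Ω)) :
    c * H ν = ∑ i ∈ s, w i * H (ρ i) := by
  classical
  induction s using Finset.induction_on generalizing c ν with
  | empty =>
    have hc : c = 0 := by simpa using congrArg (fun m : Measure Ω => m univ) hν
    simp [hc]
  | insert a s ha ih =>
    have := ν.nonempty
    let rest : FiniteMeasure Ω := ⟨∑ i ∈ s, w i • (ρ i : Measure Ω), inferInstance⟩
    have hrest : rest.mass • (rest.normalize : Measure Ω) = ∑ i ∈ s, w i • (ρ i : Measure Ω) :=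
      congrArg Subtype.val rest.self_eq_mass_smul_normalize.symm
    rw [Finset.sum_insert ha] at hν ⊢
    rw [← ih hrest]
    exact hH.mul_apply_eq_add (hν.trans (by rw [hrest]))

lemma map_simpleFunc_eq_sum_dirac {α : Type*} [MeasurableSpace α] (T : SimpleFunc α Ω)
    (μ : Measure α) : μ.map T = ∑ y ∈ T.range, μ (T ⁻¹' {y}) • Measure.dirac y := by
  classical
  ext s hs
  rw [Measure.map_apply T.measurable hs, Measure.finsetSum_apply]
  have : T ⁻¹' s = T ⁻¹' ↑(T.range.filter (· ∈ s)) := by ext x; simp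
  rw [this, ← T.sum_measure_preimage_singleton, Finset.sum_filter]
  refine Finset.sum_congr rfl fun y _ => ?_
  by_cases hy : y ∈ s <;> simp [hs, hy]

variable [TopologicalSpace Ω] [OpensMeasurableSpace Ω]

lemma isAffine_integral (f : Ω →ᵇ ℝ) :
    IsAffine fun ν : ProbabilityMeasure Ω => ∫ ω, f ω ∂(ν : Measure Ω) :=
  fun _ _ _ ht => integral_mix ht (f.integrable _) (f.integrable _)

lemma tendsto_mix {ι : Type*} {l : Filter ι} {t : ι → ℝ≥0} (ht : ∀ i, t i ≤ 1)
    (ht₀ : Tendsto t l (𝓝 0)) (ρ : ι → ProbabilityMeasure Ω) (η : ProbabilityMeasure Ω) :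
    Tendsto (fun i => mix (t i) (ht i) (ρ i) η) l (𝓝 η) := by
  refine ProbabilityMeasure.tendsto_iff_forall_integral_tendsto.2 fun f => ?_
  have ht₀' : Tendsto (fun i => (t i : ℝ)) l (𝓝 0) := NNReal.tendsto_coe.2 ht₀
  have hρ : Tendsto (fun i => (t i : ℝ) * ∫ ω, f ω ∂(ρ i : Measure Ω)) l (𝓝 0) :=
    ht₀'.zero_mul_isBoundedUnder_le <|
      isBoundedUnder_of ⟨‖f‖, fun i => f.norm_integral_le_norm (ρ i : Measure Ω)⟩
  simp_rw [isAffine_integral f _ _ _ (ht _)]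
  simpa using hρ.add ((ht₀'.const_sub 1).mul_const (∫ ω, f ω ∂(η : Measure Ω)))

lemma IsAffine.exists_abs_le {H : ProbabilityMeasure Ω → ℝ} (hH : IsAffine H)
    (hc : Continuous H) : ∃ M, ∀ ν, |H ν| ≤ M := by
  -- Mixing `ρ n`, where `|H (ρ n)| > n`, into `ρ 0` with weight `≈ 1 / n` changes `H` by
  -- roughly `1` or more, while the mixtures converge to `ρ 0`.
  by_contra! hunbdd
  choose ρ hρ using hunbdd
  let t : ℕ → ℝ≥0 := fun n => 1 / ((n : ℝ≥0) + 1)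
  have ht : ∀ n, t n ≤ 1 := fun n => by simp [t]
  have ht₀ : Tendsto t atTop (𝓝 0) := tendsto_one_div_add_atTop_nhds_zero_nat
  have ht₀' : Tendsto (fun n => (t n : ℝ)) atTop (𝓝 0) := NNReal.tendsto_coe.2 ht₀
  have hmix := (hc.tendsto _).comp (tendsto_mix ht ht₀ (fun n => ρ (n + 1)) (ρ 0))
  have hlim : Tendsto (fun n => (t n : ℝ) * H (ρ (n + 1))) atTop (𝓝 0) := by
    simpa [Function.comp_def, hH _ _ _ (ht _)] using
      hmix.sub ((ht₀'.const_sub 1).mul_const (H (ρ 0)))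
  have hge : ∀ n : ℕ, 1 ≤ |(t n : ℝ) * H (ρ (n + 1))| := fun n => by
    have hpos : (0 : ℝ) < n + 1 := by positivity
    rw [abs_mul, NNReal.abs_eq]
    simpa [t, inv_mul_eq_div, one_le_div hpos] using (hρ (n + 1)).le
  exact absurd (ge_of_tendsto' (by simpa using hlim.abs) hge) (by norm_num)

/-- The bounded continuous function on `Ω` obtained by restricting an affine continuous functional
to the Dirac masses; integration against it recovers the functional, see
`IsAffine.apply_eq_integral_density`. -/
noncomputable def IsAffine.density {H : ProbabilityMeasure Ω → ℝ} (hH : IsAffine H)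
    (hc : Continuous H) : Ω →ᵇ ℝ :=
  .ofNormedAddCommGroup (fun ω => H (diracProba ω)) (hc.comp continuous_diracProba)
    (hH.exists_abs_le hc).choose fun _ => (hH.exists_abs_le hc).choose_spec _

lemma IsAffine.apply_map_simpleFunc {α : Type*} [MeasurableSpace α] {H : ProbabilityMeasure Ω → ℝ}
    (hH : IsAffine H) (hc : Continuous H) (T : SimpleFunc α Ω) (ν : ProbabilityMeasure α) :
    H (ν.map T.aemeasurable) =
      ∫ ω, hH.density hc ω ∂(ν.map T.aemeasurable : Measure Ω) := by
  have hmap : (ν.map T.aemeasurable : Measure Ω) =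
      ∑ y ∈ T.range, ν (T ⁻¹' {y}) • (diracProba y : Measure Ω) := by
    rw [ProbabilityMeasure.toMeasure_map, map_simpleFunc_eq_sum_dirac]
    exact Finset.sum_congr rfl fun y _ =>
      congrArg (· • Measure.dirac y) (ν.ennreal_coeFn_eq_coeFn_toMeasure _).symm
  have hint := integral_finsetSum_measure (s := T.range) (f := hH.density hc)
    (μ := fun y => ν (T ⁻¹' {y}) • (diracProba y : Measure Ω))
    fun y _ => ((hH.density hc).integrable _).smul_measure_nnreal
  have hdirac : ∀ y, ∫ ω, hH.density hc ω ∂(diracProba y : Measure Ω) = H (diracProba y) :=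
    fun y => integral_dirac' _ y (hH.density hc).continuous.stronglyMeasurable
  have hsum := hH.mul_apply_eq_sum (c := 1) ((one_smul _ _).trans hmap)
  rw [hmap, hint]
  simpa [integral_smul_nnreal_measure, NNReal.smul_def, hdirac] using hsum

end Affine

section Representation

variable {Ω : Type*} [PseudoMetricSpace Ω] [SeparableSpace Ω] [MeasurableSpace Ω] [BorelSpace Ω]

lemma tendsto_map_nearestPt_denseSeq [Nonempty Ω] (ν : ProbabilityMeasure Ω) :
    Tendsto (fun n => ν.map (SimpleFunc.nearestPt (denseSeq Ω) n).aemeasurable) atTop (𝓝 ν) := by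
  have hlim := (tendstoInDistribution_of_ae_tendsto (l := atTop) (μ' := (ν : Measure Ω)) (Z := id)
    (fun n => (SimpleFunc.nearestPt (denseSeq Ω) n).aemeasurable) aemeasurable_id
    (.of_forall fun x => SimpleFunc.tendsto_nearestPt (denseRange_denseSeq Ω x))).tendsto
  simp only [Measure.map_id] at hlim
  exact hlim

theorem IsAffine.apply_eq_integral_density {H : ProbabilityMeasure Ω → ℝ} (hH : IsAffine H)
    (hc : Continuous H) (ν : ProbabilityMeasure Ω) :
    H ν = ∫ ω, hH.density hc ω ∂(ν : Measure Ω) := by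
  have := ν.nonempty
  have hlim := tendsto_map_nearestPt_denseSeq ν
  refine tendsto_nhds_unique_of_eventuallyEq ((hc.tendsto ν).comp hlim)
    (ProbabilityMeasure.tendsto_iff_forall_integral_tendsto.1 hlim (hH.density hc))
    (.of_forall fun n => ?_)
  exact hH.apply_map_simpleFunc hc _ _

end Representation

section TruncDist

variable {Ω : Type*} [PseudoMetricSpace Ω]

/-- The distance truncated at `2`: the transport cost dual to the Kantorovich–Rubinstein distance,
whose test functions, being bounded by `1`, oscillate by at most `2`. -/
noncomputable def truncDist (x y : Ω) : ℝ :=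
  min (dist x y) 2

lemma truncDist_nonneg (x y : Ω) : 0 ≤ truncDist x y :=
  le_min dist_nonneg zero_le_two

lemma truncDist_le_dist (x y : Ω) : truncDist x y ≤ dist x y :=
  min_le_left _ _

lemma truncDist_le_two (x y : Ω) : truncDist x y ≤ 2 :=
  min_le_right _ _

lemma truncDist_self (x : Ω) : truncDist x x = 0 := by
  simp [truncDist]

lemma truncDist_triangle (x y z : Ω) : truncDist x z ≤ truncDist x y + truncDist y z := by
  unfold truncDist
  rcases min_cases (dist x y) 2 with h | h <;> rcases min_cases (dist y z) 2 with h' | h' <;>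
    rw [h.1, h'.1] <;> grind [dist_triangle x y z, dist_nonneg]

lemma continuous_truncDist : Continuous fun p : Ω × Ω => truncDist p.1 p.2 :=
  continuous_dist.min continuous_const

lemma lipschitzWith_of_sub_le_mul_truncDist {K : ℝ≥0} {g : Ω → ℝ}
    (hg : ∀ x y, g x - g y ≤ K * truncDist x y) : LipschitzWith K g :=
  .of_le_add_mul K fun x y => by
    have := mul_le_mul_of_nonneg_left (truncDist_le_dist x y) K.coe_nonneg
    linarith [hg x y]

lemma sub_le_truncDist_of_lipschitzWith {f : Ω → ℝ} (hf : LipschitzWith 1 f)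
    (hb : ∀ ω, |f ω| ≤ 1) (x y : Ω) : f x - f y ≤ truncDist x y := by
  refine le_min ?_ ?_
  · simpa [Real.dist_eq] using (le_abs_self _).trans (hf.dist_le_mul x y)
  · linarith [(abs_le.1 (hb x)).2, (abs_le.1 (hb y)).1]

end TruncDist

section KantorovichRubinstein

lemma integral_sub_integral_le_of_abs_le_one {Ω : Type*} [MeasurableSpace Ω] {f : Ω → ℝ}
    (hb : ∀ ω, |f ω| ≤ 1) (μ η : Measure Ω) [IsFiniteMeasure μ] [IsFiniteMeasure η] :
    ∫ ω, f ω ∂μ - ∫ ω, f ω ∂η ≤ μ.real univ + η.real univ := by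
  have hbound : ∀ (ν : Measure Ω) [IsFiniteMeasure ν], |∫ ω, f ω ∂ν| ≤ ν.real univ := fun ν _ => by
    simpa using norm_integral_le_of_norm_le_const (μ := ν) (f := f) (.of_forall hb)
  linarith [(abs_le.1 (hbound μ)).2, (abs_le.1 (hbound η)).1]

variable {Ω : Type*} [PseudoMetricSpace Ω] [MeasurableSpace Ω]

lemma krDist_le {μ η : Measure Ω} {b : ℝ}
    (h : ∀ f : Ω → ℝ, LipschitzWith 1 f → (∀ ω, |f ω| ≤ 1) → ∫ ω, f ω ∂μ - ∫ ω, f ω ∂η ≤ b) :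
    krDist μ η ≤ b :=
  csSup_le ⟨0, 0, .const' 0, by simp, by simp⟩ (by rintro _ ⟨f, hf, hb, rfl⟩; exact h f hf hb)

lemma integral_sub_integral_le_krDist {f : Ω → ℝ} (hf : LipschitzWith 1 f)
    (hb : ∀ ω, |f ω| ≤ 1) (μ η : Measure Ω) [IsFiniteMeasure μ] [IsFiniteMeasure η] :
    ∫ ω, f ω ∂μ - ∫ ω, f ω ∂η ≤ krDist μ η :=
  le_csSup ⟨_, by rintro _ ⟨f, -, hb, rfl⟩; exact integral_sub_integral_le_of_abs_le_one hb μ η⟩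
    ⟨f, hf, hb, rfl⟩

lemma krDist_le_two (μ η : Measure Ω) [IsProbabilityMeasure μ] [IsProbabilityMeasure η] :
    krDist μ η ≤ 2 :=
  krDist_le fun f _ hb => by
    simpa [one_add_one_eq_two] using integral_sub_integral_le_of_abs_le_one hb μ η

lemma krDist_nonneg (μ η : Measure Ω) : 0 ≤ krDist μ η :=
  Real.sSup_nonneg' ⟨0, ⟨0, .const' 0, by simp, by simp⟩, le_rfl⟩

lemma krDist_comm (μ η : Measure Ω) [IsFiniteMeasure μ] [IsFiniteMeasure η] :
    krDist μ η = krDist η μ := by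
  have hle : ∀ (μ η : Measure Ω) [IsFiniteMeasure μ] [IsFiniteMeasure η],
      krDist μ η ≤ krDist η μ := fun μ η _ _ => krDist_le fun f hf hb => by
    have := integral_sub_integral_le_krDist hf.neg (by simpa using hb) η μ
    simp only [Pi.neg_apply, integral_neg] at this
    linarith
  exact (hle μ η).antisymm (hle η μ)

/-- Lipschitz continuity with constant `K` of a functional on `Δ(Ω)` with respect to the
Kantorovich–Rubinstein distance, stated by hand because `ProbabilityMeasure Ω` carries no metric
instance. -/
def KRLipschitzWith (K : ℝ≥0) (V : ProbabilityMeasure Ω → ℝ) : Prop :=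
  ∀ μ η : ProbabilityMeasure Ω, |V μ - V η| ≤ K * krDist (μ : Measure Ω) (η : Measure Ω)

lemma KRLipschitzWith.bddAbove_range {K : ℝ≥0} {V : ProbabilityMeasure Ω → ℝ}
    (hlip : KRLipschitzWith K V) : BddAbove (range V) := by
  obtain _ | ⟨⟨η⟩⟩ := isEmpty_or_nonempty (ProbabilityMeasure Ω)
  · simp
  refine ⟨V η + K * 2, ?_⟩
  rintro _ ⟨μ, rfl⟩
  have := mul_le_mul_of_nonneg_left (krDist_le_two (μ : Measure Ω) η) K.coe_nonneg
  linarith [(abs_le.1 (hlip μ η)).2]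

lemma integral_sub_integral_le_mul_krDist_of_abs_le {K : ℝ≥0} {f : Ω → ℝ} (hf : LipschitzWith K f)
    (hb : ∀ ω, |f ω| ≤ K) (μ η : Measure Ω) [IsFiniteMeasure μ] [IsFiniteMeasure η] :
    ∫ ω, f ω ∂μ - ∫ ω, f ω ∂η ≤ K * krDist μ η := by
  obtain rfl | hK := eq_or_ne K 0
  · have hzero : ∀ ω, f ω = 0 := by simpa using hb
    simp [hzero]
  have hK' : (0 : ℝ) < K := NNReal.coe_pos.2 hK.bot_lt
  have hlip : LipschitzWith 1 fun ω => (K : ℝ)⁻¹ * f ω := .of_dist_le_mul fun x y => by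
    rw [Real.dist_eq, ← mul_sub, abs_mul, abs_of_pos (inv_pos.2 hK'), inv_mul_le_iff₀ hK',
      NNReal.coe_one, one_mul]
    exact hf.dist_le_mul x y
  have hbdd : ∀ ω, |(K : ℝ)⁻¹ * f ω| ≤ 1 := fun ω => by
    rw [abs_mul, abs_of_pos (inv_pos.2 hK'), inv_mul_le_iff₀ hK', mul_one]
    exact hb ω
  have := integral_sub_integral_le_krDist hlip hbdd μ η
  rwa [integral_const_mul, integral_const_mul, ← mul_sub, inv_mul_le_iff₀ hK'] at this

variable [OpensMeasurableSpace Ω]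

lemma integral_sub_integral_le_mul_krDist {K : ℝ≥0} {g : Ω →ᵇ ℝ}
    (hg : ∀ x y, g x - g y ≤ K * truncDist x y) (μ η : Measure Ω) [IsProbabilityMeasure μ]
    [IsProbabilityMeasure η] : ∫ ω, g ω ∂μ - ∫ ω, g ω ∂η ≤ K * krDist μ η := by
  have : Nonempty Ω := ProbabilityMeasure.nonempty ⟨μ, ‹_›⟩
  let m : ℝ := (⨅ x, g x) + K
  have hlip : LipschitzWith K fun ω => g ω - m := .of_le_add_mul K fun x y => by
    linarith [(lipschitzWith_of_sub_le_mul_truncDist hg).le_add_mul x y]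
  have hosc : ∀ x y, g x - g y ≤ K * 2 := fun x y =>
    (hg x y).trans (mul_le_mul_of_nonneg_left (truncDist_le_two x y) K.coe_nonneg)
  have hbdd : ∀ ω, |g ω - m| ≤ K := fun ω => by
    have hlow : ⨅ x, g x ≤ g ω := ciInf_le g.isBounded_range.bddBelow ω
    have hupp : g ω - K * 2 ≤ ⨅ x, g x := le_ciInf fun y => by linarith [hosc ω y]
    rw [abs_le]
    constructor <;> linarith
  have := integral_sub_integral_le_mul_krDist_of_abs_le hlip hbdd μ η
  rw [integral_sub (g.integrable μ) (integrable_const m),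
    integral_sub (g.integrable η) (integrable_const m)] at this
  simpa using this

variable [SeparableSpace Ω]

lemma integrable_truncDist {T : Ω → Ω} (hT : Measurable T) (μ : Measure Ω) [IsFiniteMeasure μ] :
    Integrable (fun ω => truncDist ω (T ω)) μ :=
  .of_bound (continuous_truncDist.measurable.comp (measurable_id.prodMk hT)).aestronglyMeasurable 2
    (.of_forall fun ω => by
      simpa [abs_of_nonneg (truncDist_nonneg _ _)] using truncDist_le_two ω (T ω))

lemma krDist_map_le {T : Ω → Ω} (hT : Measurable T) (μ : Measure Ω) [IsFiniteMeasure μ] :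
    krDist μ (μ.map T) ≤ ∫ ω, truncDist ω (T ω) ∂μ := by
  refine krDist_le fun f hf hb => ?_
  have hint : ∀ ν : Measure Ω, IsFiniteMeasure ν → Integrable f ν := fun ν _ =>
    .of_bound hf.continuous.measurable.aestronglyMeasurable 1 (.of_forall hb)
  have hfT : Integrable (fun ω => f (T ω)) μ :=
    (hint (μ.map T) inferInstance).comp_measurable hT
  rw [integral_map hT.aemeasurable hf.continuous.measurable.aestronglyMeasurable,
    ← integral_sub (hint μ inferInstance) hfT]
  exact integral_mono ((hint μ inferInstance).sub hfT) (integrable_truncDist hT μ) fun ω =>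
    sub_le_truncDist_of_lipschitzWith hf hb ω (T ω)

end KantorovichRubinstein

section Selection

lemma exists_measurable_forall_lt {X Y α : Type*} [MeasurableSpace X] [TopologicalSpace Y]
    [SeparableSpace Y] [Nonempty Y] [MeasurableSpace Y] [TopologicalSpace α]
    [SecondCountableTopology α] [LinearOrder α] [OrderClosedTopology α] [MeasurableSpace α]
    [OpensMeasurableSpace α] {F : X → Y → α} {g : X → α} (hF : ∀ x, UpperSemicontinuous (F x))
    (hF_meas : ∀ y, Measurable fun x => F x y) (hg : Measurable g) (h : ∀ x, ∃ y, F x y < g x) :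
    ∃ T : X → Y, Measurable T ∧ ∀ x, F x (T x) < g x := by
  classical
  have hdense : ∀ x, ∃ n, F x (denseSeq Y n) < g x := fun x =>
    (denseRange_denseSeq Y).exists_mem_open ((hF x).isOpen_preimage _) (h x)
  refine ⟨fun x => denseSeq Y (Nat.find (hdense x)), measurable_from_nat.comp ?_, fun x =>
    Nat.find_spec (hdense x)⟩
  exact measurable_find hdense fun n => measurableSet_lt (hF_meas _) hg

end Selection

section LipEnvelope

variable {Ω : Type*} [PseudoMetricSpace Ω]

lemma bddBelow_range_add_mul_truncDist (K : ℝ≥0) (f : Ω →ᵇ ℝ) (x : Ω) :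
    BddBelow (range fun y => f y + K * truncDist x y) :=
  ⟨-‖f‖, by
    rintro _ ⟨y, rfl⟩
    exact le_add_of_le_of_nonneg (f.neg_norm_le_apply y)
      (mul_nonneg K.coe_nonneg (truncDist_nonneg x y))⟩

lemma iInf_add_mul_truncDist_sub_le (K : ℝ≥0) (f : Ω →ᵇ ℝ) (x y : Ω) :
    (⨅ z, f z + K * truncDist x z) - (⨅ z, f z + K * truncDist y z) ≤ K * truncDist x y := by
  have : Nonempty Ω := ⟨x⟩
  rw [sub_le_comm]
  refine le_ciInf fun z => ?_
  have hx := ciInf_le (bddBelow_range_add_mul_truncDist K f x) z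
  have htri := mul_le_mul_of_nonneg_left (truncDist_triangle x y z) K.coe_nonneg
  linarith

/-- The Pasch–Hausdorff envelope of `f` for the cost `K * truncDist`, that is, the largest minorant
of `f` that is `K`-Lipschitz for `truncDist`. It turns a majorant of a Lipschitz functional into one
of controlled steepness. -/
noncomputable def lipEnvelope (K : ℝ≥0) (f : Ω →ᵇ ℝ) : Ω →ᵇ ℝ :=
  .mkOfBound ⟨fun x => ⨅ y, f y + K * truncDist x y,
      (lipschitzWith_of_sub_le_mul_truncDist (iInf_add_mul_truncDist_sub_le K f)).continuous⟩
    (K * 2) fun x y => by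
      have hle : ∀ x y : Ω, K * truncDist x y ≤ K * 2 := fun x y =>
        mul_le_mul_of_nonneg_left (truncDist_le_two x y) K.coe_nonneg
      exact abs_sub_le_iff.2 ⟨(iInf_add_mul_truncDist_sub_le K f x y).trans (hle x y),
        (iInf_add_mul_truncDist_sub_le K f y x).trans (hle y x)⟩

lemma lipEnvelope_sub_le (K : ℝ≥0) (f : Ω →ᵇ ℝ) (x y : Ω) :
    lipEnvelope K f x - lipEnvelope K f y ≤ K * truncDist x y :=
  iInf_add_mul_truncDist_sub_le K f x y

lemma lipEnvelope_le (K : ℝ≥0) (f : Ω →ᵇ ℝ) (x : Ω) : lipEnvelope K f x ≤ f x := by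
  have := ciInf_le (bddBelow_range_add_mul_truncDist K f x) x
  rwa [truncDist_self, mul_zero, add_zero] at this

variable [MeasurableSpace Ω] [SeparableSpace Ω]

lemma exists_measurable_add_mul_truncDist_lt [OpensMeasurableSpace Ω] [Nonempty Ω] (K : ℝ≥0)
    (f : Ω →ᵇ ℝ) {ε : ℝ} (hε : 0 < ε) :
    ∃ T : Ω → Ω, Measurable T ∧
      ∀ x, f (T x) + K * truncDist x (T x) < lipEnvelope K f x + ε := by
  have hcont_right : ∀ x : Ω, Continuous (truncDist x) := fun x =>
    continuous_truncDist.comp (.prodMk_right x)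
  have hcont_left : ∀ y : Ω, Continuous fun x => truncDist x y := fun y =>
    continuous_truncDist.comp (.prodMk_left y)
  exact exists_measurable_forall_lt (F := fun x y => f y + K * truncDist x y)
    (fun x => (f.continuous.add ((hcont_right x).const_mul _)).upperSemicontinuous)
    (fun y => (((hcont_left y).const_mul _).const_add _).measurable)
    ((lipEnvelope K f).continuous.add_const ε).measurable
    fun x => exists_lt_of_ciInf_lt (lt_add_of_pos_right _ hε)

lemma le_integral_lipEnvelope [BorelSpace Ω] {V : ProbabilityMeasure Ω → ℝ} {K : ℝ≥0}
    (hlip : KRLipschitzWith K V) {f : Ω →ᵇ ℝ}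
    (hf : ∀ ν : ProbabilityMeasure Ω, V ν ≤ ∫ ω, f ω ∂(ν : Measure Ω))
    (ν : ProbabilityMeasure Ω) : V ν ≤ ∫ ω, lipEnvelope K f ω ∂(ν : Measure Ω) := by
  have := ν.nonempty
  refine le_of_forall_pos_le_add fun ε hε => ?_
  obtain ⟨T, hT, hTε⟩ := exists_measurable_add_mul_truncDist_lt K f hε
  have hfT : Integrable (fun ω => f (T ω)) (ν : Measure Ω) :=
    (f.integrable ((ν : Measure Ω).map T)).comp_measurable hT
  have hc := (integrable_truncDist hT (ν : Measure Ω)).const_mul (K : ℝ)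
  have hg := (lipEnvelope K f).integrable (ν : Measure Ω)
  calc V ν
    _ ≤ V (ν.map hT.aemeasurable) + K * krDist (ν : Measure Ω) ((ν : Measure Ω).map T) :=
      sub_le_iff_le_add'.1 ((le_abs_self _).trans (hlip ν (ν.map hT.aemeasurable)))
    _ ≤ ∫ ω, f ω ∂((ν : Measure Ω).map T) + K * ∫ ω, truncDist ω (T ω) ∂(ν : Measure Ω) := by
      gcongr
      · exact hf _
      · exact krDist_map_le hT _
    _ = ∫ ω, f (T ω) + K * truncDist ω (T ω) ∂(ν : Measure Ω) := by
      rw [integral_map hT.aemeasurable f.continuous.measurable.aestronglyMeasurable,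
        integral_add hfT hc, integral_const_mul]
    _ ≤ ∫ ω, lipEnvelope K f ω + ε ∂(ν : Measure Ω) :=
      integral_mono (hfT.add hc) (hg.add (integrable_const ε)) fun ω => (hTε ω).le
    _ = ∫ ω, lipEnvelope K f ω ∂(ν : Measure Ω) + ε := by
      simp [integral_add hg (integrable_const ε)]

end LipEnvelope

section ConcaveClosure

variable {Ω : Type*} [MeasurableSpace Ω] {V : ProbabilityMeasure Ω → ℝ}

lemma concaveClosure_le_integral [TopologicalSpace Ω] [OpensMeasurableSpace Ω] {f : Ω →ᵇ ℝ}
    (hf : ∀ ν : ProbabilityMeasure Ω, V ν ≤ ∫ ω, f ω ∂(ν : Measure Ω))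
    (μ : ProbabilityMeasure Ω) : concaveClosure V μ ≤ ∫ ω, f ω ∂(μ : Measure Ω) :=
  csInf_le ⟨V μ, by rintro _ ⟨H, -, -, hVH, rfl⟩; exact hVH μ⟩
    ⟨_, ProbabilityMeasure.continuous_integral_boundedContinuousFunction f, isAffine_integral f,
      hf, rfl⟩

variable [PseudoMetricSpace Ω] [SeparableSpace Ω] [BorelSpace Ω]

lemma le_concaveClosure (hV : BddAbove (range V)) {μ : ProbabilityMeasure Ω} {r : ℝ}
    (h : ∀ f : Ω →ᵇ ℝ, (∀ ν : ProbabilityMeasure Ω, V ν ≤ ∫ ω, f ω ∂(ν : Measure Ω)) →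
      r ≤ ∫ ω, f ω ∂(μ : Measure Ω)) : r ≤ concaveClosure V μ := by
  obtain ⟨M, hM⟩ := hV
  refine le_csInf ⟨M, fun _ => M, continuous_const, fun _ _ t _ => by ring,
    fun ν => hM (mem_range_self ν), rfl⟩ ?_
  rintro _ ⟨H, hc, hH, hVH, rfl⟩
  rw [hH.apply_eq_integral_density hc]
  exact h _ fun ν => (hVH ν).trans_eq (hH.apply_eq_integral_density hc ν)

lemma concaveClosure_sub_le {K : ℝ≥0} (hlip : KRLipschitzWith K V) (μ η : ProbabilityMeasure Ω) :
    concaveClosure V μ - concaveClosure V η ≤ K * krDist (μ : Measure Ω) (η : Measure Ω) := by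
  rw [sub_le_comm]
  refine le_concaveClosure hlip.bddAbove_range fun f hf => ?_
  have hmaj := concaveClosure_le_integral (le_integral_lipEnvelope hlip hf) μ
  have hsteep := integral_sub_integral_le_mul_krDist (lipEnvelope_sub_le K f) μ η
  have hbelow : ∫ ω, lipEnvelope K f ω ∂(η : Measure Ω) ≤ ∫ ω, f ω ∂(η : Measure Ω) :=
    integral_mono ((lipEnvelope K f).integrable _) (f.integrable _) (lipEnvelope_le K f)
  linarith

theorem boundedSteepness_of_lipschitz_general {K : ℝ≥0} (hlip : KRLipschitzWith K V) :
    KRLipschitzWith K (concaveClosure V) := fun μ η =>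
  abs_sub_le_iff.2 ⟨concaveClosure_sub_le hlip μ η,
    krDist_comm (μ : Measure Ω) η ▸ concaveClosure_sub_le hlip η μ⟩

end ConcaveClosure

/-- **Proposition 3**: if `V` is Lipschitz continuous (with respect to the
Kantorovich–Rubinstein distance), then the concave closure `V̂` has bounded steepness at
`μ₀`. -/
theorem boundedSteepness_of_lipschitz
    {Ω : Type*} [MetricSpace Ω] [CompactSpace Ω] [MeasurableSpace Ω] [BorelSpace Ω]
    (μ₀ : ProbabilityMeasure Ω)
    (hfull : ∀ U : Set Ω, IsOpen U → U.Nonempty → 0 < (μ₀ : Measure Ω) U)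
    (V : ProbabilityMeasure Ω → ℝ) (hV : UpperSemicontinuous V)
    (K : ℝ)
    (hlip : ∀ μ η : ProbabilityMeasure Ω,
      |V μ - V η| ≤ K * krDist (μ : Measure Ω) (η : Measure Ω)) :
    ∃ L : ℝ, ∀ μ : ProbabilityMeasure Ω,
      concaveClosure V μ - concaveClosure V μ₀
        ≤ L * krDist (μ : Measure Ω) (μ₀ : Measure Ω) := by
  have hV_lip : KRLipschitzWith K.toNNReal V := fun μ η => (hlip μ η).trans <|
    mul_le_mul_of_nonneg_right K.le_coe_toNNReal (krDist_nonneg _ _)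
  exact ⟨K.toNNReal, fun μ =>
    (le_abs_self _).trans (boundedSteepness_of_lipschitz_general hV_lip μ μ₀)⟩
end
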